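/- arXiv:0705.0422 — 2 statements merged into one kernel-verified Lean document; each statement's English description precedes it below -/
import Mathlib

section
/- For any integer k ≥ 2 and any outerplanar simple graph G with maximum degree Δ(G) ≥ 3, we have χ_k(G) ≤ ch_k(G) ≤ ⌊(Δ(G) − 1)/k⌋ + 3. -/
open SimpleGraph

/-- A drawing of a simple graph in the plane: vertices are mapped to distinct points,
edges to arcs (injective continuous curves parametrised on `[0,1]`) joining the images of
their endpoints, whose interiors avoid the vertex points and each other. -/
structure PlaneEmbedding {V : Type*} (G : SimpleGraph V) where
  pos : V → ℝ × ℝ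
  inj : Function.Injective pos
  arc : G.edgeSet → ℝ → ℝ × ℝ
  arc_cont : ∀ e, ContinuousOn (arc e) (Set.Icc 0 1)
  arc_inj : ∀ e, Set.InjOn (arc e) (Set.Icc 0 1)
  arc_ends : ∀ e : G.edgeSet, ∃ u v : V, (e : Sym2 V) = s(u, v) ∧
      arc e 0 = pos u ∧ arc e 1 = pos v
  arc_avoid : ∀ e : G.edgeSet, ∀ t ∈ Set.Ioo (0:ℝ) 1, arc e t ∉ Set.range pos
  arc_disjoint : ∀ e f : G.edgeSet, e ≠ f → ∀ s ∈ Set.Ioo (0:ℝ) 1, ∀ t ∈ Set.Ioo (0:ℝ) 1,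
      arc e s ≠ arc f t

/-- A graph is planar if it admits a drawing in the plane. -/
def SimpleGraph.IsPlanar {V : Type*} (G : SimpleGraph V) : Prop :=
  Nonempty (PlaneEmbedding G)

/-- A graph is outerplanar if it admits a plane drawing with all vertices on the unit
circle and all edges inside the closed unit disk. -/
def SimpleGraph.IsOuterplanar {V : Type*} (G : SimpleGraph V) : Prop :=
  ∃ emb : PlaneEmbedding G, (∀ v, ‖emb.pos v‖ = 1) ∧
    ∀ e, ∀ t ∈ Set.Icc (0:ℝ) 1, ‖emb.arc e t‖ ≤ 1

/-- A `k`-frugal colouring: a proper vertex colouring in which no colour appears more than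
`k` times in the neighbourhood of any vertex. -/
def SimpleGraph.IsFrugalColoring {V α : Type*} (G : SimpleGraph V) (k : ℕ) (c : V → α) : Prop :=
  (∀ u v, G.Adj u v → c u ≠ c v) ∧
  ∀ (v : V) (a : α), {u | u ∈ G.neighborSet v ∧ c u = a}.ncard ≤ k

/-- The `k`-frugal chromatic number `χ_k(G)`: the least number of colours in a `k`-frugal
colouring of `G`. -/
noncomputable def SimpleGraph.frugalChromaticNumber {V : Type*} (G : SimpleGraph V) (k : ℕ) : ℕ :=
  sInf {n : ℕ | ∃ c : V → ℕ, (∀ v, c v < n) ∧ G.IsFrugalColoring k c}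

/-- The `k`-frugal choice number `ch_k(G)`: the least `t` such that any assignment of lists
of `t` integers to the vertices admits a `k`-frugal colouring from the lists. -/
noncomputable def SimpleGraph.frugalChoiceNumber {V : Type*} (G : SimpleGraph V) (k : ℕ) : ℕ :=
  sInf {t : ℕ | ∀ L : V → Finset ℤ, (∀ v, (L v).card = t) →
    ∃ c : V → ℤ, (∀ v, c v ∈ L v) ∧ G.IsFrugalColoring k c}

/-- A complex number in polar form determines the imaginary part of its logarithms up to `2π`. -/
lemma exists_int_im_eq_of_exp_eq {θ : ℂ} {r x : ℝ} (hr : 0 < r)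
    (h : Complex.exp θ = r * Complex.exp (x * Complex.I)) :
    ∃ m : ℤ, θ.im = x + m * (2 * Real.pi) := by
  have h' : Complex.exp θ = Complex.exp (Real.log r + x * Complex.I) := by
    rw [h, Complex.exp_add, ← Complex.ofReal_exp, Real.exp_log hr]
  obtain ⟨m, hm⟩ := Complex.exp_eq_exp_iff_exists_int.1 h'
  refine ⟨m, ?_⟩
  simpa using congrArg Complex.im hm

lemma exp_mul_I_sub_exp_mul_I (a b : ℝ) :
    Complex.exp (a * Complex.I) - Complex.exp (b * Complex.I) =
      (2 * Real.sin ((b - a) / 2) : ℝ) *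
        Complex.exp (((a + b) / 2 - Real.pi / 2 : ℝ) * Complex.I) := by
  have ha : a = (a + b) / 2 - (b - a) / 2 := by ring
  have hb : b = (a + b) / 2 + (b - a) / 2 := by ring
  generalize (a + b) / 2 = u at *
  generalize (b - a) / 2 = w at *
  subst ha hb
  rw [Complex.exp_mul_I, Complex.exp_mul_I, Complex.exp_mul_I]
  simp only [← Complex.ofReal_cos, ← Complex.ofReal_sin, Real.cos_sub, Real.cos_add, Real.sin_sub, Real.sin_add]
  apply Complex.ext <;> simp <;> ring

/-- A continuous angle staying within a right angle of `φ` modulo `2π` does not wind. -/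
lemma sub_eq_of_cos_sub_nonneg {g : ℝ → ℝ} (hg : Continuous g) {φ x y : ℝ} {m n : ℤ}
    (hcos : ∀ t, 0 ≤ Real.cos (g t - φ))
    (h0 : g 0 = x + m * (2 * Real.pi)) (h1 : g 1 = y + n * (2 * Real.pi))
    (hx : |x - φ| ≤ Real.pi / 2) (hy : |y - φ| ≤ Real.pi / 2) : g 1 - g 0 = y - x := by
  have hpi := Real.pi_pos
  rw [abs_le] at hx hy
  have avoid : ∀ j : ℤ, ∀ t, g t ≠ φ + Real.pi + j * (2 * Real.pi) := by
    intro j t ht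
    have h := hcos t
    rw [ht, show φ + Real.pi + j * (2 * Real.pi) - φ = Real.pi + j * (2 * Real.pi) by ring,
      Real.cos_add_int_mul_two_pi, Real.cos_pi] at h
    linarith
  rcases lt_trichotomy m n with hmn | rfl | hmn
  · have h : (m : ℝ) + 1 ≤ n := by exact_mod_cast hmn
    obtain ⟨t, ht⟩ := mem_range_of_exists_le_of_exists_ge hg
      (c := φ + Real.pi + m * (2 * Real.pi)) ⟨0, by linarith⟩ ⟨1, by nlinarith⟩
    exact absurd ht (avoid m t)
  · linarith
  · have h : (n : ℝ) + 1 ≤ m := by exact_mod_cast hmn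
    obtain ⟨t, ht⟩ := mem_range_of_exists_le_of_exists_ge hg
      (c := φ + Real.pi + n * (2 * Real.pi)) ⟨1, by linarith⟩ ⟨0, by nlinarith⟩
    exact absurd ht (avoid n t)

/-- Seen from the point of the unit circle at angle `φ`, a curve in the unit disk joining the
points at angles `β` and `δ` turns by half the difference of these angles. -/
lemma im_log_sub_eq {θ z : ℝ → ℂ} {φ β δ : ℝ} (hθ : Continuous θ)
    (h : ∀ t, Complex.exp (θ t) = Complex.exp (φ * Complex.I) - z t) (hz : ∀ t, ‖z t‖ ≤ 1)
    (h0 : z 0 = Complex.exp (β * Complex.I)) (h1 : z 1 = Complex.exp (δ * Complex.I))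
    (hβ : φ < β) (hβ' : β < φ + 2 * Real.pi) (hδ : φ < δ) (hδ' : δ < φ + 2 * Real.pi) :
    (θ 1).im - (θ 0).im = (δ - β) / 2 := by
  have key : ∀ t x : ℝ, z t = Complex.exp (x * Complex.I) → φ < x → x < φ + 2 * Real.pi →
      ∃ m : ℤ, (θ t).im = ((φ + x) / 2 - Real.pi / 2) + m * (2 * Real.pi) := by
    intro t x hx hx1 hx2
    refine exists_int_im_eq_of_exp_eq (r := 2 * Real.sin ((x - φ) / 2)) ?_ ?_
    · have := Real.sin_pos_of_pos_of_lt_pi (x := (x - φ) / 2) (by linarith) (by linarith)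
      linarith
    · rw [h, hx, exp_mul_I_sub_exp_mul_I]
  obtain ⟨m, hm⟩ := key 0 β h0 hβ hβ'
  obtain ⟨n, hn⟩ := key 1 δ h1 hδ hδ'
  have := sub_eq_of_cos_sub_nonneg (g := fun t => (θ t).im) (φ := φ)
    (Complex.continuous_im.comp hθ) ?_ hm hn ?_ ?_
  · linarith
  · intro t
    have e : Complex.exp (θ t - φ * Complex.I) = 1 - z t * Complex.exp (-(φ * Complex.I)) := by
      rw [sub_eq_add_neg, Complex.exp_add, h, sub_mul, ← Complex.exp_add]
      simp
    have e' := congrArg Complex.re e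
    rw [Complex.exp_re, Complex.sub_re 1, Complex.one_re] at e'
    have hn : ‖z t * Complex.exp (-(φ * Complex.I))‖ ≤ 1 := by
      rw [norm_mul, ← neg_mul, ← Complex.ofReal_neg, Complex.norm_exp_ofReal_mul_I, mul_one]
      exact hz t
    have hre := (Complex.re_le_norm (z t * Complex.exp (-(φ * Complex.I)))).trans hn
    have hpos := Real.exp_pos (θ t - φ * Complex.I).re
    have him : (θ t - φ * Complex.I).im = (θ t).im - φ := by simp
    rw [him] at e'
    by_contra hneg
    nlinarith [mul_neg_of_pos_of_neg hpos (not_le.1 hneg)]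
  · rw [abs_le]; constructor <;> linarith
  · rw [abs_le]; constructor <;> linarith

/-- Two curves in the closed unit disk whose endpoints interlace on the unit circle meet. -/
lemma exists_eq_of_interlacing_of_continuous {p q : ℝ → ℂ} (hp : Continuous p) (hq : Continuous q)
    (hp1 : ∀ t, ‖p t‖ ≤ 1) (hq1 : ∀ t, ‖q t‖ ≤ 1) {a b c d : ℝ}
    (hpa : p 0 = Complex.exp (a * Complex.I)) (hqb : q 0 = Complex.exp (b * Complex.I))
    (hpc : p 1 = Complex.exp (c * Complex.I)) (hqd : q 1 = Complex.exp (d * Complex.I))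
    (hab : a < b) (hbc : b < c) (hcd : c < d) (hda : d < a + 2 * Real.pi) :
    ∃ s t, p s = q t := by
  by_contra! hne
  let F : C(ℝ × ℝ, ℂ) := ⟨fun x => p x.1 - q x.2, by fun_prop⟩
  have hF : ∀ x, F x ≠ 0 := fun x => sub_ne_zero.2 (hne _ _)
  obtain ⟨T, ⟨-, hT⟩, -⟩ := Complex.isCoveringMapOn_exp.existsUnique_continuousMap_lifts F
    (a₀ := (0, 0)) (e₀ := Complex.log (F (0, 0))) (Complex.exp_log (hF _)) hF
  have hexp : ∀ s t, Complex.exp (T (s, t)) = p s - q t := fun s t => congrFun hT (s, t)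
  have shift : ∀ x : ℝ, Complex.exp ((x + 2 * Real.pi : ℝ) * Complex.I) =
      Complex.exp (x * Complex.I) := by
    intro x
    push_cast
    rw [add_mul, Complex.exp_add, Complex.exp_two_pi_mul_I, mul_one]
  have flip : ∀ s t, Complex.exp (T (s, t) + Real.pi * Complex.I) = q t - p s := by
    intro s t
    rw [Complex.exp_add, hexp, Complex.exp_pi_mul_I]
    ring
  have left := im_log_sub_eq (θ := fun t => T (0, t)) (z := q) (φ := a) (β := b) (δ := d)
    (by fun_prop) (fun t => by rw [hexp, hpa]) hq1 hqb hqd hab (by linarith) (by linarith) hda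
  have right := im_log_sub_eq (θ := fun t => T (1, t)) (z := q) (φ := c) (β := b + 2 * Real.pi)
    (δ := d) (by fun_prop) (fun t => by rw [hexp, hpc]) hq1 (by rw [shift, hqb]) hqd
    (by linarith) (by linarith) hcd (by linarith)
  have bottom := im_log_sub_eq (θ := fun s => T (s, 0) + Real.pi * Complex.I) (z := p) (φ := b)
    (β := a + 2 * Real.pi) (δ := c) (by fun_prop) (fun t => by rw [flip, hqb]) hp1
    (by rw [shift, hpa]) hpc (by linarith) (by linarith) hbc (by linarith)
  have top := im_log_sub_eq (θ := fun s => T (s, 1) + Real.pi * Complex.I) (z := p) (φ := d)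
    (β := a + 2 * Real.pi) (δ := c + 2 * Real.pi) (by fun_prop)
    (fun t => by rw [flip, hqd]) hp1 (by rw [shift, hpa]) (by rw [shift, hpc])
    (by linarith) (by linarith) (by linarith) (by linarith)
  simp only [Complex.add_im] at bottom top
  linarith [Real.pi_pos]

lemma exists_eq_of_interlacing {p q : ℝ → ℂ} (hp : ContinuousOn p (Set.Icc 0 1))
    (hq : ContinuousOn q (Set.Icc 0 1)) (hp1 : ∀ t ∈ Set.Icc (0 : ℝ) 1, ‖p t‖ ≤ 1)
    (hq1 : ∀ t ∈ Set.Icc (0 : ℝ) 1, ‖q t‖ ≤ 1) {a b c d : ℝ}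
    (hpa : p 0 = Complex.exp (a * Complex.I)) (hqb : q 0 = Complex.exp (b * Complex.I))
    (hpc : p 1 = Complex.exp (c * Complex.I)) (hqd : q 1 = Complex.exp (d * Complex.I))
    (hab : a < b) (hbc : b < c) (hcd : c < d) (hda : d < a + 2 * Real.pi) :
    ∃ s ∈ Set.Icc (0 : ℝ) 1, ∃ t ∈ Set.Icc (0 : ℝ) 1, p s = q t := by
  have h01 : (0 : ℝ) ≤ 1 := zero_le_one
  let π := fun t : ℝ => (Set.projIcc (0 : ℝ) 1 h01 t : ℝ)
  have hπ : Continuous π := continuous_subtype_val.comp continuous_projIcc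
  have hmem : ∀ t, π t ∈ Set.Icc (0 : ℝ) 1 := fun t => (Set.projIcc (0 : ℝ) 1 h01 t).2
  have hπ0 : π 0 = 0 := by simp [π]
  have hπ1 : π 1 = 1 := by simp [π]
  obtain ⟨s, t, h⟩ := exists_eq_of_interlacing_of_continuous (p := p ∘ π) (q := q ∘ π)
    (hp.comp_continuous hπ hmem) (hq.comp_continuous hπ hmem) (fun t => hp1 _ (hmem t))
    (fun t => hq1 _ (hmem t)) (by simpa [hπ0] using hpa) (by simpa [hπ0] using hqb)
    (by simpa [hπ1] using hpc) (by simpa [hπ1] using hqd) hab hbc hcd hda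
  exact ⟨π s, hmem s, π t, hmem t, h⟩

/-- A homeomorphism turning the unit square of `ℝ × ℝ` into the unit disk of `ℂ`. -/
lemma exists_homeomorph_square_disk :
    ∃ h : ℝ × ℝ ≃ₜ ℂ, (∀ x, ‖x‖ ≤ 1 → ‖h x‖ ≤ 1) ∧ ∀ x, ‖x‖ = 1 → ‖h x‖ = 1 := by
  let e := Complex.equivRealProdCLM.symm
  let s : Set ℂ := e '' Metric.closedBall 0 1
  have hc : Convex ℝ s := (convex_closedBall _ _).is_linear_image e.toLinearMap.isLinear
  have hint : interior s = e '' Metric.ball 0 1 := by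
    rw [← interior_closedBall _ one_ne_zero]
    exact (e.toHomeomorph.image_interior _).symm
  have hfr : frontier s = e '' Metric.sphere 0 1 := by
    rw [← frontier_closedBall _ one_ne_zero]
    exact (e.toHomeomorph.image_frontier _).symm
  have hcl : IsCompact s := (isCompact_closedBall _ _).image e.continuous
  obtain ⟨h, -, hh, hh'⟩ := exists_homeomorph_image_interior_closure_frontier_eq_unitBall hc
    (by rw [hint]; exact ⟨e 0, 0, by simp, rfl⟩) hcl.isBounded
  rw [hcl.isClosed.closure_eq] at hh
  rw [hfr] at hh'
  refine ⟨e.toHomeomorph.trans h, fun x hx => ?_, fun x hx => ?_⟩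
  · have : h (e x) ∈ Metric.closedBall (0 : ℂ) 1 :=
      hh ▸ ⟨e x, ⟨x, by simpa using hx, rfl⟩, rfl⟩
    simpa using this
  · have : h (e x) ∈ Metric.sphere (0 : ℂ) 1 :=
      hh' ▸ ⟨e x, ⟨x, by simpa using hx, rfl⟩, rfl⟩
    simpa using this

namespace PlaneEmbedding

variable {V : Type*} {G : SimpleGraph V} (emb : PlaneEmbedding G)

/-- The arc of an edge can be traversed starting from any of its two endpoints. -/
lemma exists_oriented_arc {u v : V} (huv : G.Adj u v) :
    ∃ p : ℝ → ℝ × ℝ, ContinuousOn p (Set.Icc 0 1) ∧ p 0 = emb.pos u ∧ p 1 = emb.pos v ∧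
      ∀ t ∈ Set.Icc (0 : ℝ) 1, ∃ s ∈ Set.Icc (0 : ℝ) 1, p t = emb.arc ⟨s(u, v), huv⟩ s := by
  obtain ⟨x, y, hxy, h0, h1⟩ := emb.arc_ends ⟨s(u, v), huv⟩
  rcases Sym2.eq_iff.1 hxy with ⟨rfl, rfl⟩ | ⟨rfl, rfl⟩
  · exact ⟨_, emb.arc_cont _, h0, h1, fun t ht => ⟨t, ht, rfl⟩⟩
  · have hmem : ∀ t ∈ Set.Icc (0 : ℝ) 1, 1 - t ∈ Set.Icc (0 : ℝ) 1 := fun t ht =>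
      ⟨by linarith [ht.2], by linarith [ht.1]⟩
    exact ⟨fun t => emb.arc _ (1 - t), (emb.arc_cont _).comp (by fun_prop) hmem, by simpa using h1,
      by simpa using h0, fun t ht => ⟨1 - t, hmem t ht, rfl⟩⟩

/-- Arcs of edges without a common endpoint are disjoint, endpoints included. -/
lemma arc_ne_arc {u v x y : V} (huv : G.Adj u v) (hxy : G.Adj x y) (hux : u ≠ x) (huy : u ≠ y)
    (hvx : v ≠ x) (hvy : v ≠ y) {s t : ℝ} (hs : s ∈ Set.Icc (0 : ℝ) 1)
    (ht : t ∈ Set.Icc (0 : ℝ) 1) :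
    emb.arc ⟨s(u, v), huv⟩ s ≠ emb.arc ⟨s(x, y), hxy⟩ t := by
  have hne : (⟨s(u, v), huv⟩ : G.edgeSet) ≠ ⟨s(x, y), hxy⟩ := by
    intro h
    rcases Sym2.eq_iff.1 (Subtype.ext_iff.1 h) with h | h
    exacts [hux h.1, huy h.1]
  have ends : ∀ {a b : V} (hab : G.Adj a b) {r : ℝ}, r ∈ Set.Icc (0 : ℝ) 1 →
      r ∈ Set.Ioo (0 : ℝ) 1 ∨ ∃ w, (w = a ∨ w = b) ∧ emb.arc ⟨s(a, b), hab⟩ r = emb.pos w := by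
    intro a b hab r hr
    obtain ⟨w, z, hwz, h0, h1⟩ := emb.arc_ends ⟨s(a, b), hab⟩
    rcases eq_or_lt_of_le hr.1 with rfl | h0'
    · refine .inr ⟨w, ?_, h0⟩
      rcases Sym2.eq_iff.1 hwz with ⟨rfl, rfl⟩ | ⟨rfl, rfl⟩ <;> simp
    · rcases eq_or_lt_of_le hr.2 with rfl | h1'
      · refine .inr ⟨z, ?_, h1⟩
        rcases Sym2.eq_iff.1 hwz with ⟨rfl, rfl⟩ | ⟨rfl, rfl⟩ <;> simp
      · exact .inl ⟨h0', h1'⟩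
  intro h
  rcases ends huv hs with hs' | ⟨w, hw, hw'⟩ <;> rcases ends hxy ht with ht' | ⟨z, hz, hz'⟩
  · exact emb.arc_disjoint _ _ hne s hs' t ht' h
  · exact emb.arc_avoid _ s hs' ⟨z, by rw [h, hz']⟩
  · exact emb.arc_avoid _ t ht' ⟨w, by rw [← h, hw']⟩
  · have := emb.inj (hw'.symm.trans (h.trans hz'))
    rcases hw with rfl | rfl <;> rcases hz with rfl | rfl <;> contradiction

end PlaneEmbedding

/-- The vertices of an outerplanar graph can be placed on a line so that no two edges, viewed as
intervals, interlace. -/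
lemma SimpleGraph.IsOuterplanar.exists_noncrossing {V : Type*} {G : SimpleGraph V}
    (hG : G.IsOuterplanar) :
    ∃ f : V → ℝ, Function.Injective f ∧
      ∀ a b c d, f a < f b → f b < f c → f c < f d → G.Adj a c → ¬ G.Adj b d := by
  obtain ⟨emb, hpos, harc⟩ := hG
  obtain ⟨h, hle, heq⟩ := exists_homeomorph_square_disk
  have hexp : ∀ v, h (emb.pos v) = Complex.exp ((h (emb.pos v)).arg * Complex.I) := by
    intro v
    have := Complex.norm_mul_exp_arg_mul_I (h (emb.pos v))
    rw [heq _ (hpos v)] at this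
    simpa using this.symm
  refine ⟨fun v => (h (emb.pos v)).arg, fun u v huv => ?_, ?_⟩
  · apply emb.inj
    apply h.injective
    rw [hexp u, hexp v]
    simp only at huv
    rw [huv]
  · intro a b c d hab hbc hcd hac hbd
    obtain ⟨p, hp, hp0, hp1, hps⟩ := emb.exists_oriented_arc hac
    obtain ⟨q, hq, hq0, hq1, hqs⟩ := emb.exists_oriented_arc hbd
    obtain ⟨s, hs, t, ht, hst⟩ := exists_eq_of_interlacing (p := h ∘ p) (q := h ∘ q)
      (h.continuous.comp_continuousOn hp) (h.continuous.comp_continuousOn hq)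
      (fun t ht => by
        obtain ⟨s, hs, e⟩ := hps t ht
        exact hle _ (e ▸ harc _ s hs))
      (fun t ht => by
        obtain ⟨s, hs, e⟩ := hqs t ht
        exact hle _ (e ▸ harc _ s hs))
      (by rw [Function.comp_apply, hp0]; exact hexp a)
      (by rw [Function.comp_apply, hq0]; exact hexp b)
      (by rw [Function.comp_apply, hp1]; exact hexp c)
      (by rw [Function.comp_apply, hq1]; exact hexp d) hab hbc hcd
      (by linarith [Complex.arg_le_pi (h (emb.pos d)), Complex.neg_pi_lt_arg (h (emb.pos a))])
    obtain ⟨s', hs', e⟩ := hps s hs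
    obtain ⟨t', ht', e'⟩ := hqs t ht
    refine emb.arc_ne_arc hac hbd ?_ ?_ ?_ ?_ hs' ht' (by rw [← e, ← e', h.injective hst]) <;>
      rintro rfl <;> linarith

/-- A vertex `u` of `S` with at most two neighbours `v`, `w` in `S` such that, when `u` is adjacent
to `v`, the neighbours of `v` in `S` other than `u` and `w` form a clique. -/
def SimpleGraph.IsReducible {V : Type*} (G : SimpleGraph V) (S : Finset V) (u v w : V) : Prop :=
  (∀ x ∈ S, G.Adj u x → x = v ∨ x = w) ∧
  (G.Adj u v → ∀ x ∈ S, ∀ y ∈ S, G.Adj v x → G.Adj v y → x ≠ u → x ≠ w → y ≠ u → y ≠ w →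
    x ≠ y → G.Adj x y)

/-- A noncrossing symmetric relation on an initial segment of `ℕ` has a reducible vertex. -/
lemma exists_reducible_nat {n : ℕ} (hn : 0 < n) (R : ℕ → ℕ → Prop) (symm : ∀ i j, R i j → R j i)
    (irrefl : ∀ i, ¬ R i i)
    (cross : ∀ a b c d, a < b → b < c → c < d → d < n → R a c → ¬ R b d) :
    ∃ u < n, ∃ v < n, ∃ w < n, (∀ x < n, R u x → x = v ∨ x = w) ∧
      (R u v → ∀ x < n, ∀ y < n, R v x → R v y → x ≠ u → x ≠ w → y ≠ u → y ≠ w → x ≠ y →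
        R x y) := by
  classical
  rcases le_or_gt n 3 with hn3 | hn3
  · obtain ⟨v, hv, w, hw, h⟩ : ∃ v < n, ∃ w < n, ∀ x < n, x = 0 ∨ x = v ∨ x = w :=
      ⟨n - 1, by omega, n - 2, by omega, by omega⟩
    refine ⟨0, hn, v, hv, w, hw, fun x hx h0 => ?_, fun _ x hx y hy hvx hvy hx0 hxw => ?_⟩
    · rcases h x hx with rfl | h'
      · exact absurd h0 (irrefl 0)
      · exact h'
    · rcases h x hx with rfl | rfl | rfl
      · exact absurd rfl hx0
      · exact absurd hvx (irrefl _)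
      · exact absurd rfl hxw
  -- a shortest closed interval with at least two interior points
  let P : ℕ → Prop := fun l => 3 ≤ l ∧ ∃ a, a + l < n ∧
    ∀ i j, a < i → i < a + l → j < n → R i j → a ≤ j ∧ j ≤ a + l
  have hP : ∃ l, P l := ⟨n - 1, by omega, 0, by omega, fun i j _ _ _ _ => by omega⟩
  obtain ⟨hl3, a, hal, hclosed⟩ := Nat.find_spec hP
  have hmin : ∀ l, P l → Nat.find hP ≤ l := fun l hl => Nat.find_min' hP hl
  generalize Nat.find hP = l at *
  -- edges inside it are short
  have short : ∀ i j, a ≤ i → i < j → j ≤ a + l → R i j → j ≤ i + 2 ∨ (i = a ∧ j = a + l) := by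
    intro i j hi hij hj hR
    by_contra! hcon
    have := hmin (j - i) ⟨by omega, i, by omega, fun x y hx hx' hy hxy => by
      by_contra hout
      rcases lt_or_ge y i with hyi | hyi
      · exact cross y i x j hyi hx (by omega) (by omega) (symm _ _ hxy) hR
      · exact cross i x j y hx (by omega) (by omega) hy hR hxy⟩
    omega
  have inner : ∀ i j, a < i → i < a + l → j < n → R i j →
      a ≤ j ∧ j ≤ a + l ∧ j ≤ i + 2 ∧ i ≤ j + 2 ∧ i ≠ j := by
    intro i j hi hi' hj hR
    have hab := hclosed i j hi hi' hj hR
    have hne : i ≠ j := by rintro rfl; exact irrefl _ hR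
    rcases lt_or_gt_of_ne hne with h | h
    · have := short i j hi.le h hab.2 hR
      omega
    · have := short j i hab.1 h hi'.le (symm _ _ hR)
      omega
  by_cases h13 : R (a + 1) (a + 3)
  · refine ⟨a + 2, by omega, a + 1, by omega, a + 3, by omega, fun x hx h => ?_,
      fun _ x hx y hy hvx hvy hxu hxw hyu hyw hxy => ?_⟩
    · have := inner _ _ (by omega) (by omega) hx h
      by_contra hcon
      rcases lt_or_ge x (a + 1) with h' | h'
      · exact cross x (a + 1) (a + 2) (a + 3) h' (by omega) (by omega) (by omega) (symm _ _ h) h13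
      · exact cross (a + 1) (a + 2) (a + 3) x (by omega) (by omega) (by omega) hx h13 h
    · have := inner _ _ (by omega) (by omega) hx hvx
      have := inner _ _ (by omega) (by omega) hy hvy
      omega
  · have h1 : ∀ x < n, R (a + 1) x → x = a + 2 ∨ x = a := by
      intro x hx h
      have := inner _ _ (by omega) (by omega) hx h
      have : x ≠ a + 3 := by rintro rfl; exact h13 h
      omega
    by_cases h24 : a + 4 < n ∧ R (a + 2) (a + 4) ∧ ¬ R (a + 3) (a + 4)
    · obtain ⟨h4n, h24, h34⟩ := h24
      have h4 := inner _ _ (by omega) (by omega) h4n h24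
      refine ⟨a + 3, by omega, a + 3, by omega, a + 2, by omega, fun x hx h => ?_,
        fun h => absurd h (irrefl _)⟩
      have := inner _ _ (by omega) (by omega) hx h
      by_contra hcon
      have : x ≠ a + 4 := by rintro rfl; exact h34 h
      rcases lt_or_ge x (a + 2) with h' | h'
      · exact cross x (a + 2) (a + 3) (a + 4) h' (by omega) (by omega) h4n (symm _ _ h) h24
      · exact cross (a + 2) (a + 3) (a + 4) x (by omega) (by omega) (by omega) hx h24 h
    · refine ⟨a + 1, by omega, a + 2, by omega, a, by omega, h1,
        fun _ x hx y hy hvx hvy hxu hxw hyu hyw hxy => ?_⟩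
      have hx' := inner _ _ (by omega) (by omega) hx hvx
      have hy' := inner _ _ (by omega) (by omega) hy hvy
      have key : a + 4 < n → R (a + 2) (a + 4) → R (a + 3) (a + 4) := fun h h' => by
        by_contra h''
        exact h24 ⟨h, h', h''⟩
      rcases lt_or_gt_of_ne hxy with h | h
      · obtain rfl : x = a + 3 := by omega
        obtain rfl : y = a + 4 := by omega
        exact key hy hvy
      · obtain rfl : y = a + 3 := by omega
        obtain rfl : x = a + 4 := by omega
        exact symm _ _ (key hx hvx)

lemma SimpleGraph.exists_isReducible {V : Type*} (G : SimpleGraph V) {f : V → ℝ}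
    (hf : Function.Injective f)
    (cross : ∀ a b c d, f a < f b → f b < f c → f c < f d → G.Adj a c → ¬ G.Adj b d)
    {S : Finset V} (hS : S.Nonempty) : ∃ u ∈ S, ∃ v w, G.IsReducible S u v w := by
  let _ : LinearOrder V := LinearOrder.lift' f hf
  have hlt : ∀ {x y : V}, x < y → f x < f y := fun h => h
  let p : Fin S.card → V := S.orderEmbOfFin rfl
  have hp : ∀ x ∈ S, ∃ i, p i = x := fun x hx => by
    have : x ∈ Set.range (S.orderEmbOfFin rfl) := by rwa [Finset.range_orderEmbOfFin]
    exact this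
  have hmono : ∀ {i j}, i < j → f (p i) < f (p j) := fun h =>
    hlt ((S.orderEmbOfFin rfl).strictMono h)
  let R : ℕ → ℕ → Prop := fun i j => ∃ hi hj, G.Adj (p ⟨i, hi⟩) (p ⟨j, hj⟩)
  obtain ⟨u, hu, v, hv, w, hw, h1, h2⟩ := exists_reducible_nat (Finset.card_pos.2 hS) R
    (fun i j ⟨hi, hj, h⟩ => ⟨hj, hi, h.symm⟩) (fun i ⟨_, _, h⟩ => G.irrefl h)
    (fun a b c d hab hbc hcd _ ⟨_, _, hac⟩ ⟨_, _, hbd⟩ =>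
      cross _ _ _ _ (hmono hab) (hmono hbc) (hmono hcd) hac hbd)
  refine ⟨p ⟨u, hu⟩, S.orderEmbOfFin_mem rfl _, p ⟨v, hv⟩, p ⟨w, hw⟩, ?_, ?_⟩
  · intro x hx hux
    obtain ⟨⟨i, hi⟩, rfl⟩ := hp x hx
    rcases h1 i hi ⟨hu, hi, hux⟩ with rfl | rfl <;> simp
  · intro huv x hx y hy hvx hvy hxu hxw hyu hyw hxy
    obtain ⟨⟨i, hi⟩, rfl⟩ := hp x hx
    obtain ⟨⟨j, hj⟩, rfl⟩ := hp y hy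
    obtain ⟨_, _, h⟩ := h2 ⟨hu, hv, huv⟩ i hi j hj ⟨hv, hi, hvx⟩ ⟨hv, hj, hvy⟩
      (by rintro rfl; exact hxu rfl) (by rintro rfl; exact hxw rfl)
      (by rintro rfl; exact hyu rfl) (by rintro rfl; exact hyw rfl) (by rintro rfl; exact hxy rfl)
    exact h

/-- At most `m / k` colours occur at least `k` times on a set of at most `m` vertices. -/
lemma card_filter_le_card_div {V : Type*} (T : Finset V) (c : V → ℤ) (L : Finset ℤ) {k m : ℕ}
    (hk : 0 < k) (hT : T.card ≤ m) :
    (L.filter fun a => k ≤ (T.filter fun x => c x = a).card).card ≤ m / k := by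
  classical
  rw [Nat.le_div_iff_mul_le hk]
  set B := L.filter fun a => k ≤ (T.filter fun x => c x = a).card with hB
  calc B.card * k ≤ ∑ a ∈ B, (T.filter fun x => c x = a).card := by
        simpa using B.card_nsmul_le_sum (fun a => (T.filter fun x => c x = a).card) k
          (fun a ha => (Finset.mem_filter.1 ha).2)
    _ = (B.biUnion fun a => T.filter fun x => c x = a).card := by
        refine (Finset.card_biUnion fun a _ b _ hab => ?_).symm
        refine Finset.disjoint_filter.2 fun x _ hxa hxb => hab (hxa.symm.trans hxb)
    _ ≤ T.card := Finset.card_le_card (Finset.biUnion_subset.2 fun a _ => T.filter_subset _)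
    _ ≤ m := hT

open Classical in
/-- If every nonempty set of vertices has a reducible vertex, then every set of vertices can be
coloured frugally from lists of size `(D - 1) / k + 3`, where `D` bounds the degrees. -/
lemma SimpleGraph.exists_frugal_on {V : Type*} [Fintype V] (G : SimpleGraph V) {k D : ℕ}
    (hk : 2 ≤ k) (hD : ∀ v, G.degree v ≤ D)
    (hred : ∀ S : Finset V, S.Nonempty → ∃ u ∈ S, ∃ v w, G.IsReducible S u v w)
    {L : V → Finset ℤ} (hL : ∀ v, (L v).card = (D - 1) / k + 3) (S : Finset V) :
    ∃ c : V → ℤ, (∀ v, c v ∈ L v) ∧ (∀ x ∈ S, ∀ y ∈ S, G.Adj x y → c x ≠ c y) ∧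
      ∀ y ∈ S, ∀ a, (S.filter fun x => G.Adj y x ∧ c x = a).card ≤ k := by
  induction S using Finset.strongInduction with
  | H S ih =>
  rcases S.eq_empty_or_nonempty with rfl | hS
  · have hne : ∀ v, (L v).Nonempty := fun v => Finset.card_pos.1 (by rw [hL]; exact Nat.succ_pos _)
    exact ⟨fun v => (hne v).choose, fun v => (hne v).choose_spec, by simp, by simp⟩
  obtain ⟨u, hu, v, w, hN, hclique⟩ := hred S hS
  obtain ⟨c, hcL, hproper, hfrugal⟩ := ih (S.erase u) (Finset.erase_ssubset hu)
  obtain ⟨b, hbL, hbv, hbw, hbk⟩ : ∃ b ∈ L u, b ≠ c v ∧ b ≠ c w ∧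
      (G.Adj u w → ((S.erase u).filter fun x => G.Adj w x ∧ c x = b).card < k) := by
    let T := (S.erase u).filter fun x => G.Adj w x ∧ G.Adj u w
    have hT : T.card ≤ D - 1 := by
      by_cases huw : G.Adj u w
      · have hsub : T ⊆ (G.neighborFinset w).erase u := by
          intro x hx
          simp only [T, Finset.mem_filter, Finset.mem_erase] at hx
          simp [hx.1.1, hx.2.1]
        have hle := Finset.card_le_card hsub
        rw [Finset.card_erase_of_mem (by simpa using huw.symm), G.card_neighborFinset_eq_degree]
          at hle
        exact hle.trans (Nat.sub_le_sub_right (hD w) 1)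
      · simp [T, huw]
    have hB := card_filter_le_card_div T c (L u) (k := k) (by omega) hT
    set B := (L u).filter fun a => k ≤ (T.filter fun x => c x = a).card
    have hcard : (insert (c v) (insert (c w) B)).card < (L u).card := by
      rw [hL]
      have := Finset.card_insert_le (c v) (insert (c w) B)
      have := Finset.card_insert_le (c w) B
      omega
    obtain ⟨b, hb, hb'⟩ := Finset.exists_mem_notMem_of_card_lt_card hcard
    simp only [Finset.mem_insert, not_or] at hb'
    refine ⟨b, hb, hb'.1, hb'.2.1, fun huw => ?_⟩
    by_contra hge
    refine hb'.2.2 (Finset.mem_filter.2 ⟨hb, (not_lt.1 hge).trans (le_of_eq ?_)⟩)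
    simp [T, huw, Finset.filter_filter]
  have hself : Function.update c u b u = b := Function.update_self ..
  have hother : ∀ x, x ≠ u → Function.update c u b x = c x := fun x hx =>
    Function.update_of_ne hx ..
  have hbN : ∀ x ∈ S, G.Adj u x → b ≠ c x := by
    intro x hx hux
    rcases hN x hx hux with rfl | rfl
    exacts [hbv, hbw]
  refine ⟨Function.update c u b, fun x => ?_, fun x hx y hy hxy => ?_, fun y hy a => ?_⟩
  · by_cases hxu : x = u
    · subst hxu; rwa [hself]
    · rw [hother x hxu]; exact hcL x
  · by_cases hxu : x = u
    · subst hxu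
      rw [hself, hother y hxy.ne']
      exact hbN y hy hxy
    · by_cases hyu : y = u
      · subst hyu
        rw [hself, hother x hxu]
        exact (hbN x hx hxy.symm).symm
      · rw [hother x hxu, hother y hyu]
        exact hproper x (Finset.mem_erase.2 ⟨hxu, hx⟩) y (Finset.mem_erase.2 ⟨hyu, hy⟩) hxy
  · by_cases hyu : y = u
    · subst hyu
      have hsub : (S.filter fun x => G.Adj y x ∧ Function.update c y b x = a) ⊆ {v, w} := by
        intro x hx
        rw [Finset.mem_filter] at hx
        simpa using hN x hx.1 hx.2.1
      exact (Finset.card_le_card hsub).trans (Finset.card_le_two.trans hk)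
    have hyS : y ∈ S.erase u := Finset.mem_erase.2 ⟨hyu, hy⟩
    by_cases hya : G.Adj u y ∧ a = b
    · obtain ⟨huy, rfl⟩ := hya
      have hsub : (S.filter fun x => G.Adj y x ∧ Function.update c u a x = a) ⊆
          insert u ((S.erase u).filter fun x => G.Adj y x ∧ c x = a) := by
        intro x hx
        rw [Finset.mem_filter] at hx
        by_cases hxu : x = u
        · simp [hxu]
        · rw [hother x hxu] at hx
          simp [hxu, hx]
      have hle := (Finset.card_le_card hsub).trans (Finset.card_insert_le _ _)
      suffices h : ((S.erase u).filter fun x => G.Adj y x ∧ c x = a).card < k by omega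
      by_cases hyw : y = w
      · subst hyw
        exact hbk huy
      · obtain rfl : y = v := (hN y hy huy).resolve_right hyw
        refine lt_of_le_of_lt (Finset.card_le_one.2 fun x hx z hz => ?_) hk
        simp only [Finset.mem_filter] at hx hz
        have hw : ∀ {x}, c x = a → x ≠ w := by
          rintro x hx rfl
          exact hbw hx.symm
        by_contra hxz
        have hadj := hclique huy x (Finset.mem_of_mem_erase hx.1) z (Finset.mem_of_mem_erase hz.1)
          hx.2.1 hz.2.1 (Finset.ne_of_mem_erase hx.1) (hw hx.2.2) (Finset.ne_of_mem_erase hz.1)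
          (hw hz.2.2) hxz
        exact hproper x hx.1 z hz.1 hadj (hx.2.2.trans hz.2.2.symm)
    · have hsub : (S.filter fun x => G.Adj y x ∧ Function.update c u b x = a) ⊆
          (S.erase u).filter fun x => G.Adj y x ∧ c x = a := by
        intro x hx
        rw [Finset.mem_filter] at hx
        have hxu : x ≠ u := by
          rintro rfl
          rw [hself] at hx
          exact hya ⟨hx.2.1.symm, hx.2.2.symm⟩
        rw [hother x hxu] at hx
        simp [hxu, hx]
      exact (Finset.card_le_card hsub).trans (hfrugal y hyS a)

/-- A `k`-frugal colouring from lists of `n` integers gives one with `n` colours. -/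
lemma SimpleGraph.frugalChromaticNumber_le {V : Type*} (G : SimpleGraph V) {k n : ℕ}
    (h : ∀ L : V → Finset ℤ, (∀ v, (L v).card = n) →
      ∃ c : V → ℤ, (∀ v, c v ∈ L v) ∧ G.IsFrugalColoring k c) :
    G.frugalChromaticNumber k ≤ n := by
  obtain ⟨c, hc, hproper, hfrugal⟩ := h (fun _ => Finset.Ico 0 n) (by simp)
  have hc' : ∀ v, 0 ≤ c v ∧ c v < n := fun v => Finset.mem_Ico.1 (hc v)
  refine Nat.sInf_le ⟨fun v => (c v).toNat, fun v => ?_, fun u v huv => ?_, fun v a => ?_⟩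
  · have := hc' v
    show (c v).toNat < n
    omega
  · have := hproper u v huv
    have := hc' u
    have := hc' v
    show (c u).toNat ≠ (c v).toNat
    omega
  · convert hfrugal v a using 5 with u
    have := hc' u
    show (c u).toNat = a ↔ c u = a
    omega

/-- For any `k ≥ 2` and outerplanar graph `G` with `Δ(G) ≥ 3`,
`χ_k(G) ≤ ch_k(G) ≤ ⌊(Δ(G) - 1)/k⌋ + 3`. -/
theorem frugal_outerplanar (k : ℕ) (hk : 2 ≤ k) {V : Type*} [Fintype V]
    (G : SimpleGraph V) [DecidableRel G.Adj] (hG : G.IsOuterplanar)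
    (hΔ : 3 ≤ G.maxDegree) :
    G.frugalChromaticNumber k ≤ G.frugalChoiceNumber k ∧
    G.frugalChoiceNumber k ≤ (G.maxDegree - 1) / k + 3 := by
  classical
  obtain ⟨f, hf, cross⟩ := hG.exists_noncrossing
  have hmem : ∀ L : V → Finset ℤ, (∀ v, (L v).card = (G.maxDegree - 1) / k + 3) →
      ∃ c : V → ℤ, (∀ v, c v ∈ L v) ∧ G.IsFrugalColoring k c := by
    intro L hL
    obtain ⟨c, hcL, hproper, hfrugal⟩ := G.exists_frugal_on hk (D := G.maxDegree)
      (fun v => by convert G.degree_le_maxDegree v)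
      (fun S hS => G.exists_isReducible hf cross hS) hL Finset.univ
    refine ⟨c, hcL, fun u v => hproper u (Finset.mem_univ _) v (Finset.mem_univ _), fun v a => ?_⟩
    convert hfrugal v (Finset.mem_univ _) a
    rw [← Set.ncard_coe_finset]
    simp
  have hne : {t : ℕ | ∀ L : V → Finset ℤ, (∀ v, (L v).card = t) →
      ∃ c : V → ℤ, (∀ v, c v ∈ L v) ∧ G.IsFrugalColoring k c}.Nonempty := ⟨_, hmem⟩
  exact ⟨G.frugalChromaticNumber_le (Nat.sInf_mem hne), Nat.sInf_le hmem⟩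
end

section
/- For any integer k ≥ 1 and any 2-connected outerplanar simple graph G with maximum degree Δ(G) ≥ 7, we have ch_k(G) ≤ ⌊(Δ(G) − 2)/k⌋ + 3. -/
open SimpleGraph

open scoped unitInterval

/-- A nowhere vanishing continuous function on a square has a continuous logarithm. -/
theorem exists_continuous_log_square (F : C(I × I, ℂ)) (hF : ∀ p, F p ≠ 0) :
    ∃ Γ : C(I × I, ℂ), ∀ p, Complex.exp (Γ p) = F p := by
  have cov := Complex.isCoveringMap_exp
  let H : C(I × I, {z : ℂ // z ≠ 0}) := ⟨fun p => ⟨F p, hF p⟩, by fun_prop⟩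
  let γ : C(I, {z : ℂ // z ≠ 0}) := ⟨fun t => H (0, t), by fun_prop⟩
  have h0 : γ 0 = (⟨_, (Complex.log (F (0, 0))).exp_ne_zero⟩ : {z : ℂ // z ≠ 0}) :=
    Subtype.ext (Complex.exp_log (hF _)).symm
  obtain ⟨g, hg, -⟩ := cov.exists_path_lifts γ _ h0
  have h1 : ∀ a, H (0, a) = (⟨_, (g a).exp_ne_zero⟩ : {z : ℂ // z ≠ 0}) := fun a =>
    (congrFun hg a).symm
  refine ⟨cov.liftHomotopy H g h1, fun p => ?_⟩
  exact congrArg Subtype.val (congrFun (cov.liftHomotopy_lifts H g h1) p)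

/-- If `exp ∘ h` is a constant times a path in the slit plane, then the change of `h` along the
path is given by the principal logarithm. -/
theorem sub_eq_log_sub_log {h w : I → ℂ} (hh : Continuous h) (hw : Continuous w) {P : ℂ}
    (hexp : ∀ t, Complex.exp (h t) = P * w t) (hs : ∀ t, w t ∈ Complex.slitPlane) :
    h 1 - h 0 = Complex.log (w 1) - Complex.log (w 0) := by
  have key : (fun t => h t - Complex.log (w t)) = fun _ => h 0 - Complex.log (w 0) := by
    refine Complex.isCoveringMap_exp.eq_of_comp_eq (hh.sub (hw.clog hs)) continuous_const ?_ 0 rfl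
    have hc : ∀ t, Complex.exp (h t - Complex.log (w t)) = P := fun t => by
      have hne := Complex.slitPlane_ne_zero (hs t)
      rw [Complex.exp_sub, hexp, Complex.exp_log hne, mul_div_cancel_right₀ _ hne]
    funext t
    exact Subtype.ext ((hc t).trans (hc 0).symm)
  have := congrFun key 1
  linear_combination this

theorem arg_one_sub_div_sub {P Q : ℂ} (hP : P ≠ 0) (hQ : Q ≠ 0) (hlt : P.arg < Q.arg)
    (h1 : 1 - Q / P ∈ Complex.slitPlane) (h2 : 1 - P / Q ∈ Complex.slitPlane) :
    (1 - Q / P).arg - (1 - P / Q).arg = Q.arg - P.arg - Real.pi := by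
  have hz : Q / P ≠ 0 := div_ne_zero hQ hP
  have e1 : 1 - Q / P = -((Q / P) * (1 - P / Q)) := by field_simp; ring
  have hn2 := Complex.slitPlane_ne_zero h2
  have hang : (((1 - Q / P).arg : ℝ) : Real.Angle) =
      ((Q.arg - P.arg + (1 - P / Q).arg + Real.pi : ℝ) : Real.Angle) := by
    rw [e1, Complex.arg_neg_coe_angle (mul_ne_zero hz hn2), Complex.arg_mul_coe_angle hz hn2,
      Complex.arg_div_coe_angle hQ hP]
    rfl
  have hsin : Real.sin (Q / P).arg = Real.sin (Q.arg - P.arg) := by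
    have := congrArg Real.Angle.sin (Complex.arg_div_coe_angle hQ hP)
    rwa [← Real.Angle.coe_sub, Real.Angle.sin_coe, Real.Angle.sin_coe] at this
  obtain ⟨m, hm⟩ := Real.Angle.angle_eq_iff_two_pi_dvd_sub.1 hang
  have hφ1 : Q.arg - P.arg < 2 * Real.pi := by
    linarith [Complex.arg_le_pi Q, Complex.neg_pi_lt_arg P]
  have him : (1 - P / Q).im = (Q / P).im / Complex.normSq (Q / P) := by
    rw [← inv_div Q P, Complex.sub_im, Complex.inv_im]; simp; ring
  have him' : (1 - Q / P).im = -(Q / P).im := by simp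
  have hns : 0 < Complex.normSq (Q / P) := Complex.normSq_pos.2 hz
  have hnorm : 0 < ‖Q / P‖ := norm_pos_iff.2 hz
  have hpi := Real.pi_pos
  have a1 := Complex.arg_le_pi (1 - Q / P)
  have a2 := Complex.neg_pi_lt_arg (1 - Q / P)
  have b1 := Complex.arg_le_pi (1 - P / Q)
  have b2 := Complex.neg_pi_lt_arg (1 - P / Q)
  suffices hmm : m = -1 by subst hmm; push_cast at hm; linarith
  have bound : -(4 * Real.pi) < 2 * Real.pi * m → 2 * Real.pi * m < 0 → m = -1 := by
    intro h h'
    have u : (m : ℝ) < 0 := by nlinarith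
    have l : (-2 : ℝ) < m := by nlinarith
    have u' : m < 0 := by exact_mod_cast u
    have l' : -2 < m := by exact_mod_cast l
    omega
  apply bound <;> rw [← hm]
  all_goals
    rcases lt_trichotomy (Q / P).im 0 with h | h | h
    · have hs : Real.sin (Q.arg - P.arg) < 0 := by
        rw [← hsin, Complex.sin_arg]; exact div_neg_of_neg_of_pos h hnorm
      have hπ : Real.pi < Q.arg - P.arg := by
        by_contra hc
        exact absurd (Real.sin_nonneg_of_nonneg_of_le_pi (by linarith) (not_lt.1 hc)) (not_le.2 hs)
      have c1 : 0 ≤ (1 - Q / P).arg := Complex.arg_nonneg_iff.2 (by rw [him']; linarith)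
      have c2 : (1 - P / Q).arg < 0 := Complex.arg_neg_iff.2 (by
        rw [him]; exact div_neg_of_neg_of_pos h hns)
      linarith
    · have c1 : (1 - Q / P).arg = 0 := Complex.arg_eq_zero_iff.2 (by
        have := Complex.mem_slitPlane_iff.1 h1
        rw [him', h] at this ⊢
        simp only [neg_zero, ne_eq, not_true_eq_false, or_false, and_true] at this ⊢
        exact this.le)
      have c2 : (1 - P / Q).arg = 0 := Complex.arg_eq_zero_iff.2 (by
        have := Complex.mem_slitPlane_iff.1 h2
        rw [him, h] at this ⊢
        simp only [zero_div, ne_eq, not_true_eq_false, or_false, and_true] at this ⊢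
        exact this.le)
      linarith
    · have hs : 0 < Real.sin (Q.arg - P.arg) := by
        rw [← hsin, Complex.sin_arg]; exact div_pos h hnorm
      have hπ : Q.arg - P.arg < Real.pi := by
        by_contra hc
        have := Real.sin_nonneg_of_nonneg_of_le_pi (x := Q.arg - P.arg - Real.pi)
          (by linarith) (by linarith)
        rw [Real.sin_sub_pi] at this
        linarith
      have c1 : (1 - Q / P).arg < 0 := Complex.arg_neg_iff.2 (by rw [him']; linarith)
      have c2 : 0 ≤ (1 - P / Q).arg := Complex.arg_nonneg_iff.2 (by
        rw [him]; exact (div_pos h hns).le)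
      linarith

/-- Two paths in a star-shaped region joining interleaved boundary points meet. -/
theorem exists_eq_of_interleaved {K : Set ℂ} {A B C D : ℂ}
    (hstar : ∀ P ∈ ({A, B, C, D} : Set ℂ), P ≠ 0 ∧
      ∀ z ∈ K, z ≠ P → 1 - z / P ∈ Complex.slitPlane)
    (hAB : A.arg < B.arg) (hBC : B.arg < C.arg) (hCD : C.arg < D.arg)
    (f g : C(I, ℂ)) (hf : ∀ t, f t ∈ K) (hg : ∀ t, g t ∈ K)
    (f0 : f 0 = A) (f1 : f 1 = C) (g0 : g 0 = B) (g1 : g 1 = D) :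
    ∃ s t, f s = g t := by
  by_contra! hne
  obtain ⟨Γ, hΓ⟩ := exists_continuous_log_square
    ⟨fun p => f p.1 - g p.2, by fun_prop⟩ (fun p => sub_ne_zero.2 (hne p.1 p.2))
  simp only [ContinuousMap.coe_mk] at hΓ
  obtain ⟨hA0, hA⟩ := hstar A (by simp)
  obtain ⟨hB0, hB⟩ := hstar B (by simp)
  obtain ⟨hC0, hC⟩ := hstar C (by simp)
  obtain ⟨hD0, hD⟩ := hstar D (by simp)
  have e1 := sub_eq_log_sub_log (h := fun t => Γ (0, t)) (w := fun t => 1 - g t / A) (P := A)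
    (by fun_prop) (by fun_prop) (fun t => by rw [hΓ, f0]; field_simp)
    (fun t => hA _ (hg t) (f0 ▸ (hne 0 t).symm))
  have e2 := sub_eq_log_sub_log (h := fun t => Γ (1, t)) (w := fun t => 1 - g t / C) (P := C)
    (by fun_prop) (by fun_prop) (fun t => by rw [hΓ, f1]; field_simp)
    (fun t => hC _ (hg t) (f1 ▸ (hne 1 t).symm))
  have e3 := sub_eq_log_sub_log (h := fun t => Γ (t, 0)) (w := fun t => 1 - f t / B) (P := -B)
    (by fun_prop) (by fun_prop) (fun t => by rw [hΓ, g0]; field_simp; ring)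
    (fun t => hB _ (hf t) (g0 ▸ hne t 0))
  have e4 := sub_eq_log_sub_log (h := fun t => Γ (t, 1)) (w := fun t => 1 - f t / D) (P := -D)
    (by fun_prop) (by fun_prop) (fun t => by rw [hΓ, g1]; field_simp; ring)
    (fun t => hD _ (hf t) (g1 ▸ hne t 1))
  simp only [f0, f1, g0, g1] at e1 e2 e3 e4
  have key : (1 - D / A).arg - (1 - B / A).arg + ((1 - C / D).arg - (1 - A / D).arg) =
      (1 - C / B).arg - (1 - A / B).arg + ((1 - D / C).arg - (1 - B / C).arg) := by
    have := congrArg Complex.im (show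
      (Complex.log (1 - D / A) - Complex.log (1 - B / A)) +
        (Complex.log (1 - C / D) - Complex.log (1 - A / D)) =
      (Complex.log (1 - C / B) - Complex.log (1 - A / B)) +
        (Complex.log (1 - D / C) - Complex.log (1 - B / C)) by
        rw [← e1, ← e2, ← e3, ← e4]; ring)
    simpa only [Complex.add_im, Complex.sub_im, Complex.log_im] using this
  have hAK : A ∈ K := f0 ▸ hf 0
  have hBK : B ∈ K := g0 ▸ hg 0
  have hCK : C ∈ K := f1 ▸ hf 1
  have hDK : D ∈ K := g1 ▸ hg 1
  have hn : ∀ {X Y : ℂ}, X.arg < Y.arg → X ≠ Y := fun h e => by simp [e] at h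
  have r1 := arg_one_sub_div_sub hA0 hB0 hAB (hA _ hBK (hn hAB).symm) (hB _ hAK (hn hAB))
  have r2 := arg_one_sub_div_sub hB0 hC0 hBC (hB _ hCK (hn hBC).symm) (hC _ hBK (hn hBC))
  have r3 := arg_one_sub_div_sub hC0 hD0 hCD (hC _ hDK (hn hCD).symm) (hD _ hCK (hn hCD))
  have hAD := (hAB.trans hBC).trans hCD
  have r4 := arg_one_sub_div_sub hA0 hD0 hAD (hA _ hDK (hn hAD).symm) (hD _ hAK (hn hAD))
  linarith [Real.pi_pos]

/-- A graph on `Fin n` is noncrossing if, placing the vertices on a circle in order, no two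
chords given by edges cross. -/
def SimpleGraph.Noncrossing {n : ℕ} (H : SimpleGraph (Fin n)) : Prop :=
  ∀ a b c d : Fin n, a < b → b < c → c < d → H.Adj a c → ¬ H.Adj b d

theorem one_sub_div_mem_slitPlane {p q : ℝ × ℝ} (hp : ‖p‖ = 1) (hq : ‖q‖ ≤ 1) (hne : q ≠ p) :
    1 - Complex.equivRealProdCLM.symm q / Complex.equivRealProdCLM.symm p ∈
      Complex.slitPlane := by
  set P := Complex.equivRealProdCLM.symm p with hP
  set Q := Complex.equivRealProdCLM.symm q with hQ
  have hP0 : P ≠ 0 := by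
    rw [hP, ne_eq, EmbeddingLike.map_eq_zero_iff]
    rintro rfl
    simp at hp
  by_contra hc
  rw [Complex.mem_slitPlane_iff, not_or] at hc
  obtain ⟨hre, him⟩ := hc
  simp only [Complex.sub_re, Complex.one_re, Complex.sub_im, Complex.one_im, not_lt, zero_sub,
    neg_eq_zero, ne_eq, not_not] at hre him
  set r := (Q / P).re with hr
  have hQP : Q = r • P := by
    have : Q / P = (r : ℂ) := Complex.ext (by simp [hr]) (by simp [him])
    rw [div_eq_iff hP0] at this
    rw [this, Complex.real_smul]
  have hqp : q = r • p := by
    apply Complex.equivRealProdCLM.symm.injective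
    rw [map_smul, ← hP, ← hQ, hQP]
  have h1 : r = 1 := by
    rw [hqp, norm_smul, hp, mul_one, Real.norm_eq_abs] at hq
    linarith [le_abs_self r]
  exact hne (by rw [hqp, h1, one_smul])

theorem eq_of_arg_eq {p q : ℝ × ℝ} (hp : ‖p‖ = 1) (hq : ‖q‖ = 1)
    (h : (Complex.equivRealProdCLM.symm p).arg = (Complex.equivRealProdCLM.symm q).arg) :
    p = q := by
  have hne : ∀ {x : ℝ × ℝ}, ‖x‖ = 1 → Complex.equivRealProdCLM.symm x ≠ 0 := by
    intro x hx
    rw [ne_eq, EmbeddingLike.map_eq_zero_iff]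
    rintro rfl
    simp at hx
  rw [Complex.arg_eq_arg_iff (hne hp) (hne hq)] at h
  set r : ℝ := ‖Complex.equivRealProdCLM.symm q‖ / ‖Complex.equivRealProdCLM.symm p‖ with hr
  have hr0 : 0 ≤ r := by positivity
  have hqp : q = r • p := by
    apply Complex.equivRealProdCLM.symm.injective
    rw [map_smul, ← h, Complex.real_smul, hr]
    push_cast
    rfl
  have h1 : r = 1 := by
    rw [hqp, norm_smul, hp, mul_one, Real.norm_eq_abs, abs_of_nonneg hr0] at hq
    exact hq
  rw [hqp, h1, one_smul]

/-- An edge of a plane drawing, as a path with prescribed orientation. -/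
theorem PlaneEmbedding.exists_path {V : Type*} {G : SimpleGraph V} (E : PlaneEmbedding G)
    {u v : V} (h : G.Adj u v) :
    ∃ f : C(I, ℝ × ℝ), f 0 = E.pos u ∧ f 1 = E.pos v ∧
      ∀ t, ∃ s ∈ Set.Icc (0 : ℝ) 1, f t = E.arc ⟨s(u, v), h⟩ s := by
  obtain ⟨x, y, hxy, h0, h1⟩ := E.arc_ends ⟨s(u, v), h⟩
  have hc : Continuous fun t : I => E.arc ⟨s(u, v), h⟩ t :=
    continuousOn_iff_continuous_domRestrict.1 (E.arc_cont ⟨s(u, v), h⟩)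
  rcases Sym2.eq_iff.1 hxy with ⟨rfl, rfl⟩ | ⟨rfl, rfl⟩
  · exact ⟨⟨_, hc⟩, by simpa using h0, by simpa using h1, fun t => ⟨t, t.2, rfl⟩⟩
  · refine ⟨⟨_, hc.comp unitInterval.continuous_symm⟩, by simpa using h1, by simpa using h0,
      fun t => ⟨unitInterval.symm t, (unitInterval.symm t).2, rfl⟩⟩

theorem PlaneEmbedding.arc_ne {V : Type*} {G : SimpleGraph V} (E : PlaneEmbedding G)
    {a b c d : V} (h : G.Adj a c) (h' : G.Adj b d) (hab : a ≠ b) (had : a ≠ d) (hcb : c ≠ b)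
    (hcd : c ≠ d) {s t : ℝ} (hs : s ∈ Set.Icc (0 : ℝ) 1) (ht : t ∈ Set.Icc (0 : ℝ) 1) :
    E.arc ⟨s(a, c), h⟩ s ≠ E.arc ⟨s(b, d), h'⟩ t := by
  have ends : ∀ {u v : V} (h : G.Adj u v) {s : ℝ}, s ∈ Set.Icc (0 : ℝ) 1 →
      s ∈ Set.Ioo (0 : ℝ) 1 ∨ E.arc ⟨s(u, v), h⟩ s = E.pos u ∨
        E.arc ⟨s(u, v), h⟩ s = E.pos v := by
    intro u v h s hs
    obtain ⟨x, y, hxy, h0, h1⟩ := E.arc_ends ⟨s(u, v), h⟩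
    rcases eq_or_lt_of_le hs.1 with rfl | hs0
    · right
      rcases Sym2.eq_iff.1 hxy with ⟨rfl, rfl⟩ | ⟨rfl, rfl⟩ <;> simp [h0]
    · rcases eq_or_lt_of_le hs.2 with rfl | hs1
      · right
        rcases Sym2.eq_iff.1 hxy with ⟨rfl, rfl⟩ | ⟨rfl, rfl⟩ <;> simp [h1]
      · exact Or.inl ⟨hs0, hs1⟩
  have hee : (⟨s(a, c), h⟩ : G.edgeSet) ≠ ⟨s(b, d), h'⟩ := by
    intro e
    rcases Sym2.eq_iff.1 (congrArg Subtype.val e) with ⟨e, -⟩ | ⟨e, -⟩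
    · exact hab e
    · exact had e
  intro he
  rcases ends h hs with hs' | hs'
  · rcases ends h' ht with ht' | ht'
    · exact E.arc_disjoint _ _ hee s hs' t ht' he
    · apply E.arc_avoid _ s hs'
      rw [he]
      rcases ht' with e | e <;> simp [e]
  · rcases ends h' ht with ht' | ht'
    · apply E.arc_avoid _ t ht'
      rw [← he]
      rcases hs' with e | e <;> simp [e]
    · rcases hs' with e | e <;> rcases ht' with e' | e' <;> rw [e, e'] at he <;>
        have := E.inj he <;> contradiction

/-- The vertices of an outerplanar graph can be ordered so that no two edges cross. -/
theorem SimpleGraph.IsOuterplanar.exists_noncrossing_s14 {V : Type*} [Fintype V]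
    {G : SimpleGraph V} (hG : G.IsOuterplanar) :
    ∃ e : Fin (Fintype.card V) ≃ V, (G.comap e).Noncrossing := by
  obtain ⟨E, hE, hball⟩ := hG
  let θ : V → ℝ := fun v => (Complex.equivRealProdCLM.symm (E.pos v)).arg
  have hθ : Function.Injective θ := fun u v h => E.inj (eq_of_arg_eq (hE u) (hE v) h)
  let _ : LinearOrder V := LinearOrder.lift' θ hθ
  let e : Fin (Fintype.card V) ≃o V := Fintype.orderIsoFinOfCardEq V rfl
  have hmono : ∀ {a b : Fin (Fintype.card V)}, a < b → θ (e a) < θ (e b) :=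
    fun h => e.strictMono h
  refine ⟨e.toEquiv, fun a b c d hab hbc hcd h h' => ?_⟩
  change G.Adj (e a) (e c) at h
  change G.Adj (e b) (e d) at h'
  obtain ⟨f, f0, f1, hf⟩ := E.exists_path h
  obtain ⟨g, g0, g1, hg⟩ := E.exists_path h'
  let T : C(ℝ × ℝ, ℂ) := ⟨Complex.equivRealProdCLM.symm, by fun_prop⟩
  have hK : ∀ P ∈ ({T (E.pos (e a)), T (E.pos (e b)), T (E.pos (e c)), T (E.pos (e d))} : Set ℂ),
      P ≠ 0 ∧ ∀ z ∈ T '' {p | ‖p‖ ≤ 1}, z ≠ P → 1 - z / P ∈ Complex.slitPlane := by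
    have : ∀ v, T (E.pos v) ≠ 0 ∧ ∀ z ∈ T '' {p | ‖p‖ ≤ 1}, z ≠ T (E.pos v) →
        1 - z / T (E.pos v) ∈ Complex.slitPlane := by
      intro v
      constructor
      · change Complex.equivRealProdCLM.symm (E.pos v) ≠ 0
        rw [ne_eq, EmbeddingLike.map_eq_zero_iff]
        intro h0
        have := hE v
        simp [h0] at this
      · rintro _ ⟨q, hq, rfl⟩ hne
        exact one_sub_div_mem_slitPlane (hE v) hq fun h => hne (by rw [h])
    rintro P (rfl | rfl | rfl | rfl) <;> exact this _
  obtain ⟨s, t, hst⟩ := exists_eq_of_interleaved hK (hmono hab) (hmono hbc) (hmono hcd)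
    (T.comp f) (T.comp g)
    (fun t => ⟨f t, by
      obtain ⟨s, hs, e⟩ := hf t
      rw [Set.mem_ofPred_eq, e]
      exact hball _ s hs, rfl⟩)
    (fun t => ⟨g t, by
      obtain ⟨s, hs, e⟩ := hg t
      rw [Set.mem_ofPred_eq, e]
      exact hball _ s hs, rfl⟩)
    (congrArg T f0) (congrArg T f1) (congrArg T g0) (congrArg T g1)
  have hfg : f s = g t := Complex.equivRealProdCLM.symm.injective hst
  obtain ⟨s', hs', es⟩ := hf s
  obtain ⟨t', ht', et⟩ := hg t
  have hne : ∀ {i j : Fin (Fintype.card V)}, i < j → e i ≠ e j := fun h => (e.strictMono h).ne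
  exact E.arc_ne h h' (hne hab) (hne ((hab.trans hbc).trans hcd)) (hne hbc).symm (hne hcd) hs' ht'
    (es.symm.trans (hfg.trans et))

/-- A graph on the vertices `0, …, n - 1` containing the cycle `0, 1, …, n - 1` and having no two
edges that cross when the vertices are placed on a circle in order. -/
structure SimpleGraph.IsChordedCycle (G : SimpleGraph ℕ) (n : ℕ) : Prop where
  lt_of_adj : ∀ {i j}, G.Adj i j → i < n
  noncrossing : ∀ {a b c d}, a < b → b < c → c < d → G.Adj a c → ¬ G.Adj b d
  adj_succ : ∀ {i}, i + 1 < n → G.Adj i (i + 1)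
  adj_zero : G.Adj 0 (n - 1)

open Classical in
/-- The neighbours of `i` below `n`. -/
noncomputable def SimpleGraph.nbrs (G : SimpleGraph ℕ) (n i : ℕ) : Finset ℕ :=
  {j ∈ Finset.range n | G.Adj i j}

theorem SimpleGraph.IsChordedCycle.mem_nbrs {G : SimpleGraph ℕ} {n : ℕ}
    (h : G.IsChordedCycle n) {i j : ℕ} : j ∈ G.nbrs n i ↔ G.Adj i j := by
  simp only [SimpleGraph.nbrs, Finset.mem_filter, Finset.mem_range, and_iff_right_iff_imp]
  exact fun hij => h.lt_of_adj hij.symm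

/-- A vertex `v` of degree two with neighbours `x` and `y` such that every colouring of the graph
obtained by replacing the path `x v y` by the edge `x y` extends to `v` by counting. -/
structure SimpleGraph.IsReducible_s14 (G : SimpleGraph ℕ) (n D v x y : ℕ) : Prop where
  ne : x ≠ y
  nbrs_eq : G.nbrs n v = {x, y}
  card_le : (G.nbrs n x \ {v, y}).card + (G.nbrs n y \ {v, x}).card + 2 ≤ D ∨
    ((∀ z ∈ G.nbrs n y \ {v, x}, ∀ w ∈ G.nbrs n y \ {v, x}, z ≠ w → G.Adj z w) ∧
      ((G.nbrs n x \ {v, y}) ∪ (G.nbrs n y \ {v, x})).card + 2 ≤ D)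

section Structure

variable {G : SimpleGraph ℕ} {n D : ℕ}

/-- If the part of a chorded cycle cut off by a chord `p 0 p L` is a path, up to triangles at its
two ends, then irreducibility forces a large degree at `p 0`. -/
theorem SimpleGraph.IsChordedCycle.le_card_nbrs_of_path (h : G.IsChordedCycle n) (hD : 7 ≤ D)
    (hdeg : ∀ i, (G.nbrs n i).card ≤ D) (hirr : ∀ v x y, ¬ G.IsReducible_s14 n D v x y)
    {L : ℕ} (hL : 3 ≤ L) (p : ℕ → ℕ) (hp : ∀ i j, i ≤ L → j ≤ L → p i = p j → i = j)
    (hadj : G.Adj (p 0) (p L)) (hcr : G.Adj (p 0) (p 2) → ¬ G.Adj (p 1) (p 3))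
    (hnb : ∀ i, 0 < i → i < L → ∀ j, G.Adj (p i) j ↔ j = p (i - 1) ∨ j = p (i + 1) ∨
      (i = 2 ∧ j = p 0 ∧ G.Adj (p 0) (p 2)) ∨
      (i + 2 = L ∧ j = p L ∧ G.Adj (p i) (p L))) :
    D ≤ (G.nbrs n (p 0)).card + 1 ∧ (G.Adj (p 0) (p 2) → D ≤ (G.nbrs n (p 0)).card) := by
  have ne : ∀ i j, i ≤ L → j ≤ L → i ≠ j → p i ≠ p j := fun i j hi hj hij e => hij (hp i j hi hj e)
  have irr : ∀ v x y, x ≠ y → G.nbrs n v = {x, y} →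
      D < (G.nbrs n x \ {v, y}).card + (G.nbrs n y \ {v, x}).card + 2 := by
    intro v x y hxy hv
    by_contra hc
    exact hirr v x y ⟨hxy, hv, Or.inl (not_lt.1 hc)⟩
  have irr' : ∀ v x y, x ≠ y → G.nbrs n v = {x, y} →
      (∀ z ∈ G.nbrs n y \ {v, x}, ∀ w ∈ G.nbrs n y \ {v, x}, z ≠ w → G.Adj z w) →
      D < ((G.nbrs n x \ {v, y}) ∪ (G.nbrs n y \ {v, x})).card + 2 := by
    intro v x y hxy hv hcl
    by_contra hc
    exact hirr v x y ⟨hxy, hv, Or.inr ⟨hcl, not_lt.1 hc⟩⟩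
  have pair : ∀ i, 0 < i → i < L → (i = 2 → ¬ G.Adj (p 0) (p 2)) →
      (i + 2 = L → ¬ G.Adj (p i) (p L)) → G.nbrs n (p i) = {p (i - 1), p (i + 1)} := by
    intro i h0 hi hα hβ
    ext j
    rw [h.mem_nbrs, hnb i h0 hi, Finset.mem_insert, Finset.mem_singleton]
    tauto
  have sub : ∀ i, 0 < i → i < L → ∀ s t : Finset ℕ, p (i - 1) ∈ s ∪ t → p (i + 1) ∈ s ∪ t →
      (i = 2 → G.Adj (p 0) (p 2) → p 0 ∈ s ∪ t) →
      (i + 2 = L → G.Adj (p i) (p L) → p L ∈ s ∪ t) → G.nbrs n (p i) \ s ⊆ t := by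
    intro i h0 hi s t h1 h2 h3 h4 j hj
    rw [Finset.mem_sdiff, h.mem_nbrs, hnb i h0 hi] at hj
    have hst : j ∈ s ∪ t := by
      rcases hj.1 with rfl | rfl | ⟨hi2, rfl, hA⟩ | ⟨hi2, rfl, hA⟩
      exacts [h1, h2, h3 hi2 hA, h4 hi2 hA]
    exact (Finset.mem_union.1 hst).resolve_left hj.2
  have a10 : G.Adj (p 0) (p 1) := ((hnb 1 (by omega) (by omega) (p 0)).2 (by simp)).symm
  have hXα : G.Adj (p 0) (p 2) →
      (G.nbrs n (p 0) \ {p 1, p 2}).card + 2 = (G.nbrs n (p 0)).card := by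
    intro hα
    have hs : ({p 1, p 2} : Finset ℕ) ⊆ G.nbrs n (p 0) := by
      simp [Finset.insert_subset_iff, h.mem_nbrs, a10, hα]
    have := Finset.card_sdiff_add_card_eq_card hs
    rwa [Finset.card_pair (ne 1 2 (by omega) (by omega) (by omega))] at this
  have hXα' : ¬ G.Adj (p 0) (p 2) →
      (G.nbrs n (p 0) \ {p 1, p 2}).card + 1 = (G.nbrs n (p 0)).card := by
    intro hα
    have : G.nbrs n (p 0) \ {p 1, p 2} = (G.nbrs n (p 0)).erase (p 1) := by
      ext j
      simp only [Finset.mem_sdiff, h.mem_nbrs, Finset.mem_insert, Finset.mem_singleton,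
        Finset.mem_erase]
      constructor
      · tauto
      · rintro ⟨h1, h2⟩
        exact ⟨h2, by rintro (rfl | rfl) <;> contradiction⟩
    rw [this, Finset.card_erase_add_one (h.mem_nbrs.2 a10)]
  have hdeg0 := hdeg (p 0)
  have n02 := ne 0 2 (by omega) (by omega) (by omega)
  have n13 := ne 1 3 (by omega) (by omega) (by omega)
  have hLX : p L ∈ G.nbrs n (p 0) \ {p 1, p 2} := by
    simp only [Finset.mem_sdiff, h.mem_nbrs, Finset.mem_insert, Finset.mem_singleton, not_or]
    exact ⟨hadj, ne L 1 (by omega) (by omega) (by omega), ne L 2 (by omega) (by omega) (by omega)⟩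
  rcases (by omega : L = 3 ∨ L = 4 ∨ L = 5 ∨ 6 ≤ L) with rfl | rfl | rfl | hL6
  · by_cases hβ : G.Adj (p 1) (p 3)
    · have hα : ¬ G.Adj (p 0) (p 2) := fun hα => hcr hα hβ
      have hY : G.nbrs n (p 1) \ {p 2, p 3} ⊆ {p 0} :=
        sub 1 (by omega) (by omega) _ _ (by simp) (by simp) (by simp) (by simp)
      have hlt := irr' (p 2) (p 3) (p 1) n13.symm
        (by rw [pair 2 (by omega) (by omega) (fun _ => hα) (by omega), Finset.pair_comm])
        (fun z hz w hw hzw => absurd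
          ((Finset.mem_singleton.1 (hY hz)).trans (Finset.mem_singleton.1 (hY hw)).symm) hzw)
      have h23 : G.Adj (p 2) (p 3) := (hnb 2 (by omega) (by omega) (p 3)).2 (by simp)
      have hs : ({p 2, p 1} : Finset ℕ) ⊆ G.nbrs n (p 3) := by
        simp [Finset.insert_subset_iff, h.mem_nbrs, h23.symm, hβ.symm]
      have hc := Finset.card_sdiff_add_card_eq_card hs
      rw [Finset.card_pair (ne 2 1 (by omega) (by omega) (by omega))] at hc
      have hX : p 0 ∈ G.nbrs n (p 3) \ {p 2, p 1} := by
        simp only [Finset.mem_sdiff, h.mem_nbrs, Finset.mem_insert, Finset.mem_singleton, not_or]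
        exact ⟨hadj.symm, n02, a10.ne⟩
      rw [Finset.union_eq_left.2 (hY.trans (Finset.singleton_subset_iff.2 hX))] at hlt
      have := hdeg (p 3)
      omega
    · have hY : G.nbrs n (p 2) \ {p 1, p 0} ⊆ {p 3} :=
        sub 2 (by omega) (by omega) _ _ (by simp) (by simp) (by simp) (by simp)
      have hlt := irr' (p 1) (p 0) (p 2) n02
        (pair 1 (by omega) (by omega) (by omega) (fun _ => hβ))
        (fun z hz w hw hzw => absurd
          ((Finset.mem_singleton.1 (hY hz)).trans (Finset.mem_singleton.1 (hY hw)).symm) hzw)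
      rw [Finset.union_eq_left.2 (hY.trans (Finset.singleton_subset_iff.2 hLX))] at hlt
      by_cases hα : G.Adj (p 0) (p 2)
      · have := hXα hα
        omega
      · have := hXα' hα
        exact ⟨by omega, by omega⟩
  · by_cases hβ : G.Adj (p 2) (p 4)
    · have hY : G.nbrs n (p 2) \ {p 1, p 0} ⊆ {p 3, p 4} :=
        sub 2 (by omega) (by omega) _ _ (by simp) (by simp) (by simp) (by simp)
      have h34 : G.Adj (p 3) (p 4) := (hnb 3 (by omega) (by omega) (p 4)).2 (by simp)
      have hlt := irr' (p 1) (p 0) (p 2) n02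
        (pair 1 (by omega) (by omega) (by omega) (by omega)) (by
          intro z hz w hw hzw
          have hz' := hY hz
          have hw' := hY hw
          simp only [Finset.mem_insert, Finset.mem_singleton] at hz' hw'
          rcases hz' with rfl | rfl <;> rcases hw' with rfl | rfl
          · exact absurd rfl hzw
          · exact h34
          · exact h34.symm
          · exact absurd rfl hzw)
      have hsub : (G.nbrs n (p 0) \ {p 1, p 2}) ∪ (G.nbrs n (p 2) \ {p 1, p 0}) ⊆
          insert (p 3) (G.nbrs n (p 0) \ {p 1, p 2}) := by
        refine Finset.union_subset (Finset.subset_insert _ _) (hY.trans ?_)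
        exact Finset.insert_subset_insert _ (Finset.singleton_subset_iff.2 hLX)
      have hc := (Finset.card_le_card hsub).trans (Finset.card_insert_le _ _)
      by_cases hα : G.Adj (p 0) (p 2)
      · have := hXα hα
        exact ⟨by omega, by omega⟩
      · have := hXα' hα
        exact ⟨by omega, fun hα' => absurd hα' hα⟩
    · by_cases hα : G.Adj (p 0) (p 2)
      · have hY : G.nbrs n (p 2) \ {p 1, p 0} ⊆ {p 3} :=
          sub 2 (by omega) (by omega) _ _ (by simp) (by simp) (by simp) (by simp [hβ])
        have hlt := irr (p 1) (p 0) (p 2) n02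
          (pair 1 (by omega) (by omega) (by omega) (by omega))
        have hc := Finset.card_le_card hY
        rw [Finset.card_singleton] at hc
        have := hXα hα
        exact ⟨by omega, by omega⟩
      · have hX : G.nbrs n (p 1) \ {p 2, p 3} ⊆ {p 0} :=
          sub 1 (by omega) (by omega) _ _ (by simp) (by simp) (by simp) (by simp)
        have hY : G.nbrs n (p 3) \ {p 2, p 1} ⊆ {p 4} :=
          sub 3 (by omega) (by omega) _ _ (by simp) (by simp) (by simp) (by simp)
        have hlt := irr (p 2) (p 1) (p 3) n13
          (pair 2 (by omega) (by omega) (fun _ => hα) (fun _ => hβ))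
        have hc := Finset.card_le_card hX
        have hc' := Finset.card_le_card hY
        rw [Finset.card_singleton] at hc hc'
        omega
  · by_cases hα : G.Adj (p 0) (p 2)
    · have hY : G.nbrs n (p 2) \ {p 1, p 0} ⊆ {p 3} :=
        sub 2 (by omega) (by omega) _ _ (by simp) (by simp) (by simp) (by simp)
      have hlt := irr (p 1) (p 0) (p 2) n02
        (pair 1 (by omega) (by omega) (by omega) (by omega))
      have hc := Finset.card_le_card hY
      rw [Finset.card_singleton] at hc
      have := hXα hα
      exact ⟨by omega, by omega⟩
    · have hX : G.nbrs n (p 1) \ {p 2, p 3} ⊆ {p 0} :=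
        sub 1 (by omega) (by omega) _ _ (by simp) (by simp) (by simp) (by simp)
      have hY : G.nbrs n (p 3) \ {p 2, p 1} ⊆ {p 4, p 5} :=
        sub 3 (by omega) (by omega) _ _ (by simp) (by simp) (by simp) (by simp)
      have hlt := irr (p 2) (p 1) (p 3) n13
        (pair 2 (by omega) (by omega) (fun _ => hα) (by omega))
      have hc := Finset.card_le_card hX
      have hc' := (Finset.card_le_card hY).trans Finset.card_le_two
      rw [Finset.card_singleton] at hc
      omega
  · have hX : G.nbrs n (p 2) \ {p 3, p 4} ⊆ {p 1, p 0} :=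
      sub 2 (by omega) (by omega) _ _ (by simp) (by simp) (by simp) (by omega)
    have hY : G.nbrs n (p 4) \ {p 3, p 2} ⊆ {p 5, p L} :=
      sub 4 (by omega) (by omega) _ _ (by simp) (by simp) (by simp) (by simp)
    have hlt := irr (p 3) (p 2) (p 4) (ne 2 4 (by omega) (by omega) (by omega))
      (pair 3 (by omega) (by omega) (by omega) (by omega))
    have hc := (Finset.card_le_card hX).trans Finset.card_le_two
    have hc' := (Finset.card_le_card hY).trans Finset.card_le_two
    omega

theorem SimpleGraph.IsChordedCycle.exists_isReducible (h : G.IsChordedCycle n) (hn : 4 ≤ n)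
    (hD : 7 ≤ D) (hdeg : ∀ i, (G.nbrs n i).card ≤ D) :
    ∃ v x y, G.IsReducible_s14 n D v x y := by
  by_contra! hirr
  -- the part of the neighbourhood of an endpoint of `a b` lying on the side of `[a, b]`
  have key : ∀ L a b, b = a + L → G.Adj a b → L = 1 ∨ L = 2 ∨
      (((G.nbrs n a) ∩ Finset.Ioc a b).card ≤ 3 ∧ ((G.nbrs n b) ∩ Finset.Ico a b).card ≤ 3 ∧
        D ≤ (G.nbrs n a).card + 1 ∧ D ≤ (G.nbrs n b).card + 1 ∧
        (((G.nbrs n a) ∩ Finset.Ioc a b).card ≤ 2 ∨ D ≤ (G.nbrs n a).card) ∧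
        (((G.nbrs n b) ∩ Finset.Ico a b).card ≤ 2 ∨ D ≤ (G.nbrs n b).card)) := by
    intro L
    induction L using Nat.strong_induction_on with
    | _ L ih =>
    intro a b hb hab
    have hL0 : L ≠ 0 := by rintro rfl; simp [hb] at hab
    by_cases hL : L < 3
    · omega
    have hbn : b < n := h.lt_of_adj hab.symm
    -- vertices strictly between `a` and `b` have only short edges
    have hin : ∀ f, a < f → f < b → ∀ j, G.Adj f j → a ≤ j ∧ j ≤ b := by
      intro f haf hfb j hfj
      constructor
      · by_contra hc
        exact h.noncrossing (not_le.1 hc) haf hfb hfj.symm hab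
      · by_contra hc
        exact h.noncrossing haf hfb (not_le.1 hc) hab hfj
    have hshort : ∀ f, a < f → f < b → ∀ j, G.Adj f j → j ≤ f + 2 ∧ f ≤ j + 2 := by
      intro f haf hfb
      have hne : (G.nbrs n f).Nonempty := ⟨f + 1, h.mem_nbrs.2 (h.adj_succ (by omega))⟩
      obtain ⟨lo, hlo⟩ : ∃ lo, lo = (G.nbrs n f).min' hne := ⟨_, rfl⟩
      obtain ⟨hi, hhi⟩ : ∃ hi, hi = (G.nbrs n f).max' hne := ⟨_, rfl⟩
      have alo : G.Adj f lo := h.mem_nbrs.1 (hlo ▸ Finset.min'_mem _ _)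
      have ahi : G.Adj f hi := h.mem_nbrs.1 (hhi ▸ Finset.max'_mem _ _)
      have hle : ∀ j, G.Adj f j → lo ≤ j ∧ j ≤ hi := fun j hj =>
        ⟨hlo ▸ Finset.min'_le _ _ (h.mem_nbrs.2 hj), hhi ▸ Finset.le_max' _ _ (h.mem_nbrs.2 hj)⟩
      have hlof : lo < f := by
        have := (hle (f - 1) (by
          have := h.adj_succ (i := f - 1) (by omega)
          rw [Nat.sub_add_cancel (by omega)] at this
          exact this.symm)).1
        omega
      have hhif : f < hi := (hle (f + 1) (h.adj_succ (by omega))).2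
      have q1 := ih (f - lo) (by have := (hin f haf hfb lo alo).1; omega) lo f (by omega) alo.symm
      have q2 := ih (hi - f) (by have := (hin f haf hfb hi ahi).2; omega) f hi (by omega) ahi
      have hcard : (G.nbrs n f).card ≤ (G.nbrs n f ∩ Finset.Ico lo f).card +
          (G.nbrs n f ∩ Finset.Ioc f hi).card := by
        refine (Finset.card_le_card ?_).trans (Finset.card_union_le _ _)
        intro j hj
        have hfj := h.mem_nbrs.1 hj
        have := hle j hfj
        have := hfj.ne
        simp only [Finset.mem_union, Finset.mem_inter, Finset.mem_Ico, Finset.mem_Ioc, hj, true_and]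
        omega
      have c1 : (G.nbrs n f ∩ Finset.Ico lo f).card ≤ f - lo :=
        (Finset.card_le_card Finset.inter_subset_right).trans (by simp)
      have c2 : (G.nbrs n f ∩ Finset.Ioc f hi).card ≤ hi - f :=
        (Finset.card_le_card Finset.inter_subset_right).trans (by simp)
      intro j hj
      have := hle j hj
      omega
    have hcard4 : ∀ f x y, a < f → f < b → G.Adj f x → G.Adj f y → x ≠ y →
        (G.nbrs n f \ {x, y}).card ≤ 2 := by
      intro f x y haf hfb hx hy hxy
      have h1 : (G.nbrs n f).card ≤ 4 := by
        have : G.nbrs n f ⊆ (Finset.Icc (f - 2) (f + 2)).erase f := by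
          intro j hj
          have hfj := h.mem_nbrs.1 hj
          have := hshort f haf hfb j hfj
          have := hfj.ne
          simp only [Finset.mem_erase, Finset.mem_Icc]
          omega
        refine (Finset.card_le_card this).trans ?_
        rw [Finset.card_erase_of_mem (by simp), Nat.card_Icc]
        omega
      have h2 : ({x, y} : Finset ℕ) ⊆ G.nbrs n f := by
        intro j hj
        rcases Finset.mem_insert.1 hj with rfl | hj
        · exact h.mem_nbrs.2 hx
        · rw [Finset.mem_singleton.1 hj]; exact h.mem_nbrs.2 hy
      rw [Finset.card_sdiff_of_subset h2, Finset.card_pair hxy]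
      omega
    have hmid : ∀ f, a < f → f + 2 < b → ¬ G.Adj f (f + 2) := by
      intro f haf hfb hf
      have s1 : G.Adj f (f + 1) := h.adj_succ (by omega)
      have s2 : G.Adj (f + 1) (f + 2) := h.adj_succ (by omega)
      refine hirr (f + 1) f (f + 2) ⟨by omega, ?_, Or.inl ?_⟩
      · ext j
        rw [h.mem_nbrs, Finset.mem_insert, Finset.mem_singleton]
        constructor
        · intro hj
          have := hj.ne
          by_contra hc
          rcases lt_or_ge j f with hjf | hjf
          · exact h.noncrossing hjf (by omega) (by omega) hj.symm hf
          · exact h.noncrossing (a := f) (b := f + 1) (c := f + 2) (d := j)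
              (by omega) (by omega) (by omega) hf hj
        · rintro (rfl | rfl)
          · exact s1.symm
          · exact s2
      · have := hcard4 f (f + 1) (f + 2) haf (by omega) s1 hf (by omega)
        have := hcard4 (f + 2) (f + 1) f (by omega) hfb s2.symm hf.symm (by omega)
        omega
    have hnb : ∀ f, a < f → f < b → ∀ j, G.Adj f j ↔ j = f - 1 ∨ j = f + 1 ∨
        (f = a + 2 ∧ j = a ∧ G.Adj a (a + 2)) ∨ (f + 2 = b ∧ j = b ∧ G.Adj f b) := by
      intro f haf hfb j
      constructor
      · intro hj
        have h1 := hshort f haf hfb j hj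
        have h2 := hin f haf hfb j hj
        have h3 := hj.ne
        by_cases e1 : j + 2 = f
        · by_cases e2 : j = a
          · subst e2 e1
            exact Or.inr (Or.inr (Or.inl ⟨rfl, rfl, hj.symm⟩))
          · subst e1
            exact absurd hj.symm (hmid j (by omega) hfb)
        · by_cases e2 : j = f + 2
          · by_cases e3 : j = b
            · subst e3
              exact Or.inr (Or.inr (Or.inr ⟨e2.symm, rfl, hj⟩))
            · subst e2
              exact absurd hj (hmid f haf (by omega))
          · omega
      · rintro (rfl | rfl | ⟨rfl, rfl, hj⟩ | ⟨-, rfl, hj⟩)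
        · have := h.adj_succ (i := f - 1) (by omega)
          rw [Nat.sub_add_cancel (by omega)] at this
          exact this.symm
        · exact h.adj_succ (by omega)
        · exact hj.symm
        · exact hj
    have left := h.le_card_nbrs_of_path hD hdeg hirr (L := L) (by omega) (fun i => a + i)
      (fun i j _ _ => by omega) (by simpa [← hb] using hab)
      (fun h1 h2 => h.noncrossing (by omega) (by omega) (by omega) h1 h2) (by
        intro i hi0 hiL j
        rw [hnb (a + i) (by omega) (by omega)]
        simp only [add_zero, ← hb]
        have e1 : a + i - 1 = a + (i - 1) := by omega
        have e2 : (a + i = a + 2) ↔ i = 2 := by omega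
        have e3 : (a + i + 2 = b) ↔ i + 2 = L := by omega
        rw [e1, e2, e3, add_assoc])
    have right := h.le_card_nbrs_of_path hD hdeg hirr (L := L) (by omega) (fun i => b - i)
      (fun i j _ _ => by omega) (by
        have : b - L = a := by omega
        simpa [this] using hab.symm)
      (fun h1 h2 => h.noncrossing (by omega) (by omega) (by omega) h2.symm h1.symm) (by
        intro i hi0 hiL j
        rw [hnb (b - i) (by omega) (by omega)]
        have e0 : b - L = a := by omega
        simp only [Nat.sub_zero, e0]
        have e1 : b - i - 1 = b - (i + 1) := by omega
        have e2 : (b - i = a + 2) ↔ i + 2 = L := by omega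
        have e3 : (b - i + 2 = b) ↔ i = 2 := by omega
        have e4 : b - i + 1 = b - (i - 1) := by omega
        rw [e1, e2, e3, e4]
        constructor
        · rintro (hj | hj | ⟨hi, hj, hA⟩ | ⟨hi, hj, hA⟩)
          · exact Or.inr (Or.inl hj)
          · exact Or.inl hj
          · refine Or.inr (Or.inr (Or.inr ⟨hi, hj, ?_⟩))
            rw [show b - i = a + 2 by omega]
            exact hA.symm
          · refine Or.inr (Or.inr (Or.inl ⟨hi, hj, ?_⟩))
            subst hi
            exact hA.symm
        · rintro (hj | hj | ⟨hi, hj, hA⟩ | ⟨hi, hj, hA⟩)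
          · exact Or.inr (Or.inl hj)
          · exact Or.inl hj
          · refine Or.inr (Or.inr (Or.inr ⟨hi, hj, ?_⟩))
            subst hi
            exact hA.symm
          · refine Or.inr (Or.inr (Or.inl ⟨hi, hj, ?_⟩))
            rw [show b - i = a + 2 by omega] at hA
            exact hA.symm)
    simp only [add_zero, Nat.sub_zero] at left right
    have ra : ∀ j, G.Adj a j → a < j → j ≤ b →
        j = a + 1 ∨ j = b ∨ (j = a + 2 ∧ G.Adj a (a + 2)) := by
      intro j hj haj hjb
      rcases eq_or_lt_of_le hjb with rfl | hjb
      · exact Or.inr (Or.inl rfl)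
      rcases (hnb j haj hjb a).1 hj.symm with e | e | ⟨e, -, hA⟩ | ⟨-, e, -⟩
      · omega
      · omega
      · exact Or.inr (Or.inr ⟨e, hA⟩)
      · omega
    have rb : ∀ j, G.Adj b j → a ≤ j → j < b →
        j = b - 1 ∨ j = a ∨ (j = b - 2 ∧ G.Adj b (b - 2)) := by
      intro j hj haj hjb
      rcases eq_or_lt_of_le haj with rfl | haj
      · exact Or.inr (Or.inl rfl)
      rcases (hnb j haj hjb b).1 hj.symm with e | e | ⟨-, e, -⟩ | ⟨e, -, hA⟩
      · omega
      · omega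
      · omega
      · refine Or.inr (Or.inr ⟨by omega, ?_⟩)
        rw [← e, Nat.add_sub_cancel, e]
        exact hA.symm
    have three : ∀ x y z : ℕ, ({x, y, z} : Finset ℕ).card ≤ 3 := fun x y z => Finset.card_le_three
    refine Or.inr (Or.inr ⟨?_, ?_, left.1, right.1, ?_, ?_⟩)
    · refine (Finset.card_le_card fun j hj => ?_).trans (three (a + 1) b (a + 2))
      simp only [Finset.mem_inter, Finset.mem_Ioc, h.mem_nbrs] at hj
      simp only [Finset.mem_insert, Finset.mem_singleton]
      have := ra j hj.1 hj.2.1 hj.2.2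
      tauto
    · refine (Finset.card_le_card fun j hj => ?_).trans (three (b - 1) a (b - 2))
      simp only [Finset.mem_inter, Finset.mem_Ico, h.mem_nbrs] at hj
      simp only [Finset.mem_insert, Finset.mem_singleton]
      have := rb j hj.1 hj.2.1 hj.2.2
      tauto
    · by_cases hA : G.Adj a (a + 2)
      · exact Or.inr (left.2 hA)
      · refine Or.inl ((Finset.card_le_card fun j hj => ?_).trans
          (Finset.card_le_two (a := a + 1) (b := b)))
        simp only [Finset.mem_inter, Finset.mem_Ioc, h.mem_nbrs] at hj
        simp only [Finset.mem_insert, Finset.mem_singleton]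
        have := ra j hj.1 hj.2.1 hj.2.2
        tauto
    · by_cases hA : G.Adj b (b - 2)
      · exact Or.inr (right.2 hA)
      · refine Or.inl ((Finset.card_le_card fun j hj => ?_).trans
          (Finset.card_le_two (a := b - 1) (b := a)))
        simp only [Finset.mem_inter, Finset.mem_Ico, h.mem_nbrs] at hj
        simp only [Finset.mem_insert, Finset.mem_singleton]
        have := rb j hj.1 hj.2.1 hj.2.2
        tauto
  have := key (n - 1) 0 (n - 1) (by omega) h.adj_zero
  have hall : G.nbrs n 0 ∩ Finset.Ioc 0 (n - 1) = G.nbrs n 0 := by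
    rw [Finset.inter_eq_left]
    intro j hj
    have hj' := h.mem_nbrs.1 hj
    have := hj'.ne
    have := h.lt_of_adj hj'.symm
    simp only [Finset.mem_Ioc]
    omega
  rw [hall] at this
  omega

end Structure

theorem SimpleGraph.Connected.exists_adj_of_mem_of_notMem {V : Type*} {G : SimpleGraph V} {w : V}
    (h : (G.induce {u : V | u ≠ w}).Connected) {A : Set V} {u v : V} (hu : u ∈ A) (hv : v ∉ A)
    (huw : u ≠ w) (hvw : v ≠ w) : ∃ x ∈ A, ∃ y ∉ A, y ≠ w ∧ G.Adj x y := by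
  obtain ⟨p⟩ := h.preconnected ⟨u, huw⟩ ⟨v, hvw⟩
  obtain ⟨d, -, hd, hd'⟩ := p.exists_boundary_dart {z | (z : V) ∈ A} hu hv
  exact ⟨d.fst, hd, d.snd, hd', d.snd.2, d.adj⟩

/-- A noncrossing graph in which no single vertex separates the others contains the cycle
`0, 1, …, n - 1`. -/
theorem SimpleGraph.isChordedCycle_of_separation {G : SimpleGraph ℕ} {n : ℕ} (hn : 3 ≤ n)
    (hlt : ∀ {i j}, G.Adj i j → i < n)
    (hcr : ∀ {a b c d}, a < b → b < c → c < d → G.Adj a c → ¬ G.Adj b d)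
    (hsep : ∀ (w : ℕ) (A : Set ℕ) (u v : ℕ), w < n → u < n → v < n → u ∈ A → v ∉ A → u ≠ w →
      v ≠ w → ∃ x ∈ A, ∃ y ∉ A, y ≠ w ∧ G.Adj x y) :
    G.IsChordedCycle n := by
  classical
  refine ⟨hlt, hcr, ?_, ?_⟩
  · intro i hi
    by_contra hij
    obtain ⟨u, hun, hui, hui'⟩ : ∃ u < n, u ≠ i ∧ u ≠ i + 1 := by
      rcases Nat.eq_zero_or_pos i with rfl | h0
      · exact ⟨2, by omega, by omega, by omega⟩
      · exact ⟨0, by omega, by omega, by omega⟩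
    obtain ⟨x, rfl, y, hy, hyi, hxy⟩ := hsep (i + 1) {i} i u hi (by omega) hun rfl hui
      (by omega) hui'
    by_cases hex : ∃ z, x + 1 < z ∧ G.Adj x z
    · obtain ⟨h1, h2⟩ := Nat.find_spec hex
      have hmin := fun z (hz : z < Nat.find hex) => Nat.find_min hex hz
      generalize Nat.find hex = w at h1 h2 hmin
      obtain ⟨s, ⟨hs, hsw⟩, t, ht, htw, hst⟩ := hsep w {z | x < z ∧ z < w} (x + 1) x
        (hlt h2.symm) hi (by omega) ⟨by omega, h1⟩ (fun h => lt_irrefl _ h.1) (by omega) (by omega)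
      simp only [Set.mem_ofPred_eq, not_and, not_lt] at ht
      rcases lt_trichotomy t x with htx | rfl | htx
      · exact hcr htx hs hsw hst.symm h2
      · have : s ≠ t + 1 := fun e => hij (e ▸ hst.symm)
        exact hmin s hsw ⟨by omega, hst.symm⟩
      · exact hcr hs hsw (by have := ht htx; omega) h2 hst
    · have hex' : ∃ z, G.Adj x z := ⟨y, hxy⟩
      have hle : ∀ z, G.Adj x z → z < x := by
        intro z hz
        have h1 := hz.ne
        have h2 : z ≠ x + 1 := fun e => hij (e ▸ hz)
        by_contra hc
        exact hex ⟨z, by omega, hz⟩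
      have h2 := Nat.find_spec hex'
      have hmin := fun z (hz : z < Nat.find hex') => Nat.find_min hex' hz
      generalize Nat.find hex' = w at h2 hmin
      have hwx := hle w h2
      obtain ⟨s, ⟨hs, hsx⟩, t, ht, htw, hst⟩ := hsep w {z | w < z ∧ z ≤ x} x (x + 1)
        (by omega) (by omega) hi ⟨hwx, le_rfl⟩ (fun h => by have := h.2; omega) (by omega) (by omega)
      simp only [Set.mem_ofPred_eq, not_and, not_le] at ht
      rcases eq_or_lt_of_le hsx with rfl | hsx
      · have h3 := hle t hst
        rcases lt_or_ge t w with h4 | h4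
        · exact hmin t h4 hst
        · have := ht (by omega)
          omega
      · rcases lt_or_ge t w with h4 | h4
        · exact hcr h4 hs hsx hst.symm h2.symm
        · exact hcr hs hsx (ht (by omega)) h2.symm hst
  · by_contra h0
    obtain ⟨x, rfl, y, hy, hyi, hxy⟩ := hsep (n - 1) {0} 0 1 (by omega) (by omega) (by omega) rfl
      (by simp) (by omega) (by omega)
    have hy := hlt hxy.symm
    have h2 : G.Adj 0 (Nat.findGreatest (G.Adj 0) (n - 1)) :=
      Nat.findGreatest_spec (m := y) (by omega) hxy
    have hmax : ∀ z, G.Adj 0 z → z ≤ Nat.findGreatest (G.Adj 0) (n - 1) := fun z hz =>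
      Nat.le_findGreatest (by have := hlt hz.symm; omega) hz
    generalize Nat.findGreatest (G.Adj 0) (n - 1) = w at h2 hmax
    have hwn := hlt h2.symm
    have hw0 := h2.ne
    have hwn' : w ≠ n - 1 := fun e => h0 (e ▸ h2)
    obtain ⟨s, hs, t, ht, htw, hst⟩ := hsep w {z | z < w} 0 (n - 1)
      (by omega) (by omega) (by omega) (by simp; omega) (by simp; omega) (by omega) (by omega)
    simp only [Set.mem_ofPred_eq, not_lt] at hs ht
    rcases Nat.eq_zero_or_pos s with rfl | hs0
    · have := hmax t hst
      omega
    · exact hcr hs0 hs (by omega) h2 hst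

section Colouring

variable {G : SimpleGraph ℕ} {n D k v x y : ℕ}

/-- A frugal colouring of a graph on the vertices `0, …, n - 1`. -/
def SimpleGraph.IsFrugalBelow (G : SimpleGraph ℕ) (n k : ℕ) (c : ℕ → ℤ) : Prop :=
  (∀ i j, G.Adj i j → c i ≠ c j) ∧ ∀ i a, {j ∈ G.nbrs n i | c j = a}.card ≤ k

/-- The colours appearing at least `k` times on `X`. -/
def saturated (c : ℕ → ℤ) (k : ℕ) (X : Finset ℕ) : Finset ℤ :=
  {a ∈ X.image c | k ≤ {j ∈ X | c j = a}.card}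

theorem mul_card_saturated_le (c : ℕ → ℤ) (k : ℕ) (X : Finset ℕ) :
    k * (saturated c k X).card ≤ X.card := by
  rw [Finset.card_eq_sum_card_image c X, mul_comm, ← smul_eq_mul]
  refine (Finset.card_nsmul_le_sum _ _ _ fun a ha => (Finset.mem_filter.1 ha).2).trans ?_
  exact Finset.sum_le_sum_of_subset (Finset.filter_subset _ _)

theorem card_lt_of_notMem_saturated {c : ℕ → ℤ} {X : Finset ℕ} {a : ℤ} (hk : 1 ≤ k)
    (ha : a ∉ saturated c k X) : {j ∈ X | c j = a}.card < k := by
  by_contra hc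
  have hne : {j ∈ X | c j = a}.Nonempty := Finset.card_pos.1 (by omega)
  obtain ⟨j, hj⟩ := hne
  rw [Finset.mem_filter] at hj
  exact ha (Finset.mem_filter.2 ⟨Finset.mem_image.2 ⟨j, hj⟩, not_lt.1 hc⟩)

theorem SimpleGraph.IsReducible_s14.card_saturated_union_le (hr : G.IsReducible_s14 n D v x y)
    {c : ℕ → ℤ} (hk : 1 ≤ k) (hc : ∀ i j, i ≠ v → j ≠ v → G.Adj i j → c i ≠ c j) :
    (saturated c k (G.nbrs n x \ {v, y}) ∪ saturated c k (G.nbrs n y \ {v, x})).card ≤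
      (D - 2) / k := by
  have hX := mul_card_saturated_le c k (G.nbrs n x \ {v, y})
  have hY := mul_card_saturated_le c k (G.nbrs n y \ {v, x})
  have hU := Finset.card_union_le (saturated c k (G.nbrs n x \ {v, y}))
    (saturated c k (G.nbrs n y \ {v, x}))
  rw [Nat.le_div_iff_mul_le hk, mul_comm]
  rcases hr.card_le with hle | ⟨hcl, hle⟩
  · have := Nat.mul_le_mul_left k hU
    rw [mul_add] at this
    omega
  · rcases eq_or_lt_of_le hk with rfl | hk2
    · have hsub : saturated c 1 (G.nbrs n x \ {v, y}) ∪ saturated c 1 (G.nbrs n y \ {v, x}) ⊆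
          ((G.nbrs n x \ {v, y}) ∪ (G.nbrs n y \ {v, x})).image c := by
        rw [Finset.image_union]
        exact Finset.union_subset_union (Finset.filter_subset _ _) (Finset.filter_subset _ _)
      have := (Finset.card_le_card hsub).trans Finset.card_image_le
      omega
    · have hempty : saturated c k (G.nbrs n y \ {v, x}) = ∅ := by
        refine Finset.filter_eq_empty_iff.2 fun a _ => not_le.2 (lt_of_le_of_lt ?_ hk2)
        refine Finset.card_le_one.2 fun i hi j hj => ?_
        rw [Finset.mem_filter] at hi hj
        by_contra hij
        have hv : ∀ z ∈ G.nbrs n y \ {v, x}, z ≠ v := by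
          intro z hz
          simp only [Finset.mem_sdiff, Finset.mem_insert, not_or] at hz
          exact hz.2.1
        exact hc i j (hv i hi.1) (hv j hj.1) (hcl i hi.1 j hj.1 hij) (hi.2.trans hj.2.symm)
      have := Finset.card_le_card (Finset.subset_union_left (s₁ := G.nbrs n x \ {v, y})
        (s₂ := G.nbrs n y \ {v, x}))
      rw [hempty, Finset.union_empty]
      omega

theorem SimpleGraph.IsReducible_s14.exists_extension (hr : G.IsReducible_s14 n D v x y)
    (h : G.IsChordedCycle n) (hk : 1 ≤ k) {c : ℕ → ℤ} {A : Finset ℤ}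
    (hA : (D - 2) / k + 3 ≤ A.card)
    (hc : ∀ i j, i ≠ v → j ≠ v → G.Adj i j → c i ≠ c j) (hxy : c x ≠ c y)
    (hfr : ∀ i a, i ≠ v → {j ∈ (G.nbrs n i).erase v | c j = a}.card ≤ k) :
    ∃ a ∈ A, G.IsFrugalBelow n k (Function.update c v a) := by
  obtain ⟨a, haA, ha⟩ : ∃ a ∈ A, a ∉ insert (c x) (insert (c y)
      (saturated c k (G.nbrs n x \ {v, y}) ∪ saturated c k (G.nbrs n y \ {v, x}))) := by
    refine Finset.exists_mem_notMem_of_card_lt_card ?_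
    have h1 := hr.card_saturated_union_le hk hc
    have h2 := Finset.card_insert_le (c y)
      (saturated c k (G.nbrs n x \ {v, y}) ∪ saturated c k (G.nbrs n y \ {v, x}))
    have h3 := Finset.card_insert_le (c x) (insert (c y)
      (saturated c k (G.nbrs n x \ {v, y}) ∪ saturated c k (G.nbrs n y \ {v, x})))
    omega
  simp only [Finset.mem_insert, Finset.mem_union, not_or] at ha
  obtain ⟨hax, hay, haX, haY⟩ := ha
  have hadj : ∀ z, G.Adj v z ↔ z = x ∨ z = y := by
    intro z
    rw [← h.mem_nbrs, hr.nbrs_eq, Finset.mem_insert, Finset.mem_singleton]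
  have hvx : x ≠ v := ((hadj x).2 (Or.inl rfl)).ne.symm
  have hvy : y ≠ v := ((hadj y).2 (Or.inr rfl)).ne.symm
  have hend : ∀ i z, i ≠ v → a ≠ c z → {j ∈ G.nbrs n i \ {v, z} | c j = a}.card < k →
      ∀ b, {j ∈ G.nbrs n i | Function.update c v a j = b}.card ≤ k := by
    intro i z hi haz hlt b
    by_cases hb : b = a
    · have hsub : {j ∈ G.nbrs n i | Function.update c v a j = b} ⊆
          insert v {j ∈ G.nbrs n i \ {v, z} | c j = a} := by
        intro j hj
        rw [Finset.mem_filter] at hj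
        by_cases hjv : j = v
        · exact Finset.mem_insert.2 (Or.inl hjv)
        · rw [Function.update_of_ne hjv, hb] at hj
          have hjz : j ≠ z := by
            rintro rfl
            exact haz hj.2.symm
          simp [hj, hjv, hjz]
      have := (Finset.card_le_card hsub).trans (Finset.card_insert_le _ _)
      omega
    · refine (Finset.card_le_card ?_).trans (hfr i b hi)
      intro j hj
      rw [Finset.mem_filter] at hj
      by_cases hjv : j = v
      · rw [hjv, Function.update_self] at hj
        exact absurd hj.2.symm hb
      · rw [Function.update_of_ne hjv] at hj
        simp [hj, hjv]
  refine ⟨a, haA, ?_, ?_⟩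
  · have hv : ∀ z, G.Adj v z → a ≠ c z := by
      intro z hz
      rcases (hadj z).1 hz with rfl | rfl
      exacts [hax, hay]
    intro i j hij
    by_cases hi : i = v
    · subst hi
      rw [Function.update_self, Function.update_of_ne hij.ne.symm]
      exact hv j hij
    · rw [Function.update_of_ne hi]
      by_cases hj : j = v
      · subst hj
        rw [Function.update_self]
        exact (hv i hij.symm).symm
      · rw [Function.update_of_ne hj]
        exact hc i j hi hj hij
  · intro i b
    by_cases hi : i = v
    · subst hi
      refine le_trans (Finset.card_le_one.2 fun p hp q hq => ?_) hk
      rw [Finset.mem_filter, hr.nbrs_eq, Finset.mem_insert, Finset.mem_singleton] at hp hq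
      obtain ⟨hp, rfl⟩ := hp
      obtain ⟨hq, hpq⟩ := hq
      rcases hp with rfl | rfl <;> rcases hq with rfl | rfl
      · rfl
      · rw [Function.update_of_ne hvx, Function.update_of_ne hvy] at hpq
        exact absurd hpq.symm hxy
      · rw [Function.update_of_ne hvx, Function.update_of_ne hvy] at hpq
        exact absurd hpq hxy
      · rfl
    by_cases hix : i = x
    · subst hix
      exact hend i y hi hay (card_lt_of_notMem_saturated hk haX) b
    by_cases hiy : i = y
    · subst hiy
      exact hend i x hi hax (card_lt_of_notMem_saturated hk haY) b
    refine (Finset.card_le_card ?_).trans (hfr i b hi)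
    intro j hj
    rw [Finset.mem_filter, h.mem_nbrs] at hj
    have hjv : j ≠ v := by
      rintro rfl
      rcases (hadj i).1 hj.1.symm with e | e
      exacts [hix e, hiy e]
    rw [Function.update_of_ne hjv] at hj
    simp [hj, hjv, h.mem_nbrs]

/-- The increasing enumeration of the natural numbers different from `v`. -/
def skip (v i : ℕ) : ℕ := if i < v then i else i + 1

theorem skip_ne (v i : ℕ) : skip v i ≠ v := by
  unfold skip
  split_ifs <;> omega

theorem skip_strictMono (v : ℕ) : StrictMono (skip v) := by
  intro i j hij
  unfold skip
  split_ifs <;> omega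

/-- The graph obtained from `G` by deleting `v`, adding the edge `x y` and relabelling. -/
def SimpleGraph.suppress (G : SimpleGraph ℕ) (v x y : ℕ) : SimpleGraph ℕ :=
  (G ⊔ SimpleGraph.edge x y).comap (skip v)

theorem SimpleGraph.suppress_adj (hxy : x ≠ y) {i j : ℕ} : (G.suppress v x y).Adj i j ↔
    G.Adj (skip v i) (skip v j) ∨ (skip v i = x ∧ skip v j = y) ∨
      (skip v i = y ∧ skip v j = x) := by
  simp only [SimpleGraph.suppress, SimpleGraph.comap_adj, SimpleGraph.sup_adj,
    SimpleGraph.edge_adj]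
  grind

theorem SimpleGraph.IsReducible_s14.isChordedCycle_suppress (hr : G.IsReducible_s14 n D v x y)
    (h : G.IsChordedCycle n) (hn : 3 ≤ n) : (G.suppress v x y).IsChordedCycle (n - 1) := by
  have hadj : ∀ z, G.Adj v z ↔ z = x ∨ z = y := by
    intro z
    rw [← h.mem_nbrs, hr.nbrs_eq, Finset.mem_insert, Finset.mem_singleton]
  have hne := hr.ne
  have hvx := (hadj x).2 (Or.inl rfl)
  have hvy := (hadj y).2 (Or.inr rfl)
  have hvn := h.lt_of_adj hvx
  have hxn := h.lt_of_adj hvx.symm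
  have hyn := h.lt_of_adj hvy.symm
  have hpred : v ≠ 0 → v - 1 = x ∨ v - 1 = y := by
    intro hv
    have := h.adj_succ (i := v - 1) (by omega)
    rw [Nat.sub_add_cancel (by omega)] at this
    exact (hadj _).1 this.symm
  have hsucc : v + 1 < n → v + 1 = x ∨ v + 1 = y := fun hv => (hadj _).1 (h.adj_succ hv)
  have hzero : v = 0 → n - 1 = x ∨ n - 1 = y := by
    intro hv
    rw [← hadj, hv]
    exact h.adj_zero
  have hlast : v + 1 = n → 0 = x ∨ 0 = y := by
    intro hv
    rw [← hadj, show v = n - 1 by omega]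
    exact h.adj_zero.symm
  have hskip : ∀ i, skip v i < n → i < n - 1 := by
    intro i hi
    unfold skip at hi
    split_ifs at hi <;> omega
  refine ⟨?_, ?_, ?_, ?_⟩
  · intro i j hij
    rw [SimpleGraph.suppress_adj hne] at hij
    apply hskip
    rcases hij with hij | hij | hij
    · exact h.lt_of_adj hij
    · omega
    · omega
  · intro a b c d hab hbc hcd hac hbd
    rw [SimpleGraph.suppress_adj hne] at hac hbd
    have h1 := skip_strictMono v hab
    have h2 := skip_strictMono v hbc
    have h3 := skip_strictMono v hcd
    have hd : skip v d < n := by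
      rcases hbd with hbd | hbd | hbd
      · exact h.lt_of_adj hbd.symm
      · omega
      · omega
    have := skip_ne v a
    have := skip_ne v b
    have := skip_ne v c
    have := skip_ne v d
    rcases hac with hac | hac
    · rcases hbd with hbd | hbd
      · exact h.noncrossing h1 h2 h3 hac hbd
      · omega
    · omega
  · intro i hi
    rw [SimpleGraph.suppress_adj hne]
    by_cases hiv : i + 1 = v
    · have e1 : skip v i = v - 1 := by unfold skip; split_ifs <;> omega
      have e2 : skip v (i + 1) = v + 1 := by unfold skip; split_ifs <;> omega
      rw [e1, e2]
      omega
    · have e : skip v (i + 1) = skip v i + 1 := by unfold skip; split_ifs <;> omega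
      rw [e]
      refine Or.inl (h.adj_succ ?_)
      unfold skip
      split_ifs <;> omega
  · rw [SimpleGraph.suppress_adj hne]
    by_cases h0 : v = 0
    · have e1 : skip v 0 = 1 := by unfold skip; split_ifs <;> omega
      have e2 : skip v (n - 1 - 1) = n - 1 := by unfold skip; split_ifs <;> omega
      rw [e1, e2]
      omega
    have e1 : skip v 0 = 0 := by unfold skip; split_ifs <;> omega
    by_cases hl : v + 1 = n
    · have e2 : skip v (n - 1 - 1) = v - 1 := by unfold skip; split_ifs <;> omega
      rw [e1, e2]
      omega
    · have e2 : skip v (n - 1 - 1) = n - 1 := by unfold skip; split_ifs <;> omega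
      rw [e1, e2]
      exact Or.inl h.adj_zero

theorem SimpleGraph.IsReducible_s14.card_nbrs_suppress_le (hr : G.IsReducible_s14 n D v x y)
    (h : G.IsChordedCycle n) (hn : 3 ≤ n) (i : ℕ) :
    ((G.suppress v x y).nbrs (n - 1) i).card ≤ (G.nbrs n (skip v i)).card := by
  have h' := hr.isChordedCycle_suppress h hn
  have hne := hr.ne
  rw [← Finset.card_image_of_injective _ (skip_strictMono v).injective]
  have hend : ∀ z, G.Adj (skip v i) v →
      ((G.suppress v x y).nbrs (n - 1) i).image (skip v) ⊆
        insert z ((G.nbrs n (skip v i)).erase v) →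
      (((G.suppress v x y).nbrs (n - 1) i).image (skip v)).card ≤
        (G.nbrs n (skip v i)).card := by
    intro z hz hsub
    refine (Finset.card_le_card hsub).trans ((Finset.card_insert_le _ _).trans ?_)
    rw [Finset.card_erase_add_one (h.mem_nbrs.2 hz)]
  have hvx : G.Adj v x := h.mem_nbrs.1 (by simp [hr.nbrs_eq])
  have hvy : G.Adj v y := h.mem_nbrs.1 (by simp [hr.nbrs_eq])
  have hsub : ∀ w ∈ ((G.suppress v x y).nbrs (n - 1) i).image (skip v),
      w ∈ (G.nbrs n (skip v i)).erase v ∨ (skip v i = x ∧ w = y) ∨ (skip v i = y ∧ w = x) := by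
    intro w hw
    obtain ⟨j, hj, rfl⟩ := Finset.mem_image.1 hw
    rw [h'.mem_nbrs, SimpleGraph.suppress_adj hne] at hj
    rw [Finset.mem_erase, h.mem_nbrs]
    exact hj.imp_left fun hj => ⟨skip_ne v j, hj⟩
  by_cases hix : skip v i = x
  · refine hend y (hix ▸ hvx.symm) fun w hw => ?_
    rcases hsub w hw with h1 | h1 | h1
    · exact Finset.mem_insert_of_mem h1
    · exact Finset.mem_insert.2 (Or.inl h1.2)
    · exact absurd (hix.symm.trans h1.1) hne
  by_cases hiy : skip v i = y
  · refine hend x (hiy ▸ hvy.symm) fun w hw => ?_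
    rcases hsub w hw with h1 | h1 | h1
    · exact Finset.mem_insert_of_mem h1
    · exact absurd h1.1 hix
    · exact Finset.mem_insert.2 (Or.inl h1.2)
  refine Finset.card_le_card fun w hw => ?_
  rcases hsub w hw with h1 | h1 | h1
  · exact Finset.mem_of_mem_erase h1
  · exact absurd h1.1 hix
  · exact absurd h1.1 hiy

theorem SimpleGraph.exists_isFrugalBelow_three (G : SimpleGraph ℕ) (hk : 1 ≤ k)
    (hG : ∀ {i j}, G.Adj i j → i < 3) (L : ℕ → Finset ℤ) (hL : ∀ i, 3 ≤ (L i).card) :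
    ∃ c, (∀ i, c i ∈ L i) ∧ G.IsFrugalBelow 3 k c := by
  have hne : ∀ i, (L i).Nonempty := fun i => Finset.card_pos.1 (by have := hL i; omega)
  choose f hf using hne
  obtain ⟨a, ha⟩ : ∃ a, a ∈ L 0 := ⟨_, hf 0⟩
  obtain ⟨b, hb, hba⟩ : ∃ b ∈ L 1, b ∉ ({a} : Finset ℤ) :=
    Finset.exists_mem_notMem_of_card_lt_card (by have := hL 1; simp; omega)
  obtain ⟨d, hd, hdab⟩ : ∃ d ∈ L 2, d ∉ ({a, b} : Finset ℤ) :=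
    Finset.exists_mem_notMem_of_card_lt_card
      (lt_of_le_of_lt Finset.card_le_two (by have := hL 2; omega))
  simp only [Finset.mem_singleton, Finset.mem_insert, not_or] at hba hdab
  let c : ℕ → ℤ := fun i => if i = 0 then a else if i = 1 then b else if i = 2 then d else f i
  have hinj : ∀ i j, i < 3 → j < 3 → c i = c j → i = j := by
    intro i j hi hj
    interval_cases i <;> interval_cases j <;> grind
  refine ⟨c, ?_, ?_, ?_⟩
  · intro i
    by_cases h0 : i = 0
    · simpa [c, h0] using ha
    by_cases h1 : i = 1
    · simpa [c, h1] using hb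
    by_cases h2 : i = 2
    · simpa [c, h2] using hd
    simpa [c, h0, h1, h2] using hf i
  · exact fun i j hij e => hij.ne (hinj i j (hG hij) (hG hij.symm) e)
  · intro i b
    refine le_trans (Finset.card_le_one.2 fun p hp q hq => ?_) hk
    simp only [SimpleGraph.nbrs, Finset.mem_filter, Finset.mem_range] at hp hq
    exact hinj p q hp.1.1 hq.1.1 (hp.2.trans hq.2.symm)

theorem SimpleGraph.IsChordedCycle.exists_isFrugalBelow (hk : 1 ≤ k) (hD : 7 ≤ D) (hn : 3 ≤ n)
    (h : G.IsChordedCycle n) (hdeg : ∀ i, (G.nbrs n i).card ≤ D) (L : ℕ → Finset ℤ)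
    (hL : ∀ i, (D - 2) / k + 3 ≤ (L i).card) :
    ∃ c, (∀ i, c i ∈ L i) ∧ G.IsFrugalBelow n k c := by
  induction n, hn using Nat.le_induction generalizing G L with
  | base => exact G.exists_isFrugalBelow_three hk h.lt_of_adj L fun i =>
      (Nat.le_add_left _ _).trans (hL i)
  | succ n hn ih =>
    obtain ⟨v, x, y, hr⟩ := h.exists_isReducible (by omega) hD hdeg
    have h' := hr.isChordedCycle_suppress h (by omega)
    obtain ⟨c', hc'L, hc', hfr'⟩ := ih h'
      (fun i => (hr.card_nbrs_suppress_le h (by omega) i).trans (hdeg _))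
      (fun i => L (skip v i)) (fun i => hL _)
    have hinv : ∀ i, i ≠ v → ∃ j, skip v j = i := by
      intro i hi
      rcases lt_or_ge i v with hlt | hge
      · exact ⟨i, if_pos hlt⟩
      · refine ⟨i - 1, ?_⟩
        unfold skip
        split_ifs <;> omega
    have hinj := (skip_strictMono v).injective
    let c : ℕ → ℤ := fun i => c' (Function.invFun (skip v) i)
    have hc : ∀ i, c (skip v i) = c' i := fun i =>
      congrArg c' (Function.leftInverse_invFun hinj i)
    have hvx : G.Adj v x := h.mem_nbrs.1 (by simp [hr.nbrs_eq])
    have hvy : G.Adj v y := h.mem_nbrs.1 (by simp [hr.nbrs_eq])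
    obtain ⟨a, ha, hfr⟩ := hr.exists_extension h hk (c := c) (hL v)
      (by
        intro i j hi hj hij
        obtain ⟨i, rfl⟩ := hinv i hi
        obtain ⟨j, rfl⟩ := hinv j hj
        rw [hc, hc]
        exact hc' i j ((SimpleGraph.suppress_adj hr.ne).2 (Or.inl hij)))
      (by
        obtain ⟨i, hi⟩ := hinv x hvx.ne.symm
        obtain ⟨j, hj⟩ := hinv y hvy.ne.symm
        rw [← hi, ← hj, hc, hc]
        exact hc' i j ((SimpleGraph.suppress_adj hr.ne).2 (Or.inr (Or.inl ⟨hi, hj⟩))))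
      (by
        intro i b hi
        obtain ⟨i, rfl⟩ := hinv i hi
        refine le_trans ?_ (hfr' i b)
        rw [← Finset.card_image_of_injective {j ∈ (G.suppress v x y).nbrs n i | c' j = b} hinj]
        refine Finset.card_le_card fun j hj => ?_
        rw [Finset.mem_filter, Finset.mem_erase, h.mem_nbrs] at hj
        obtain ⟨j, rfl⟩ := hinv j hj.1.1
        refine Finset.mem_image_of_mem _ (Finset.mem_filter.2 ⟨?_, ?_⟩)
        · exact h'.mem_nbrs.2 ((SimpleGraph.suppress_adj hr.ne).2 (Or.inl hj.1.2))
        · rw [← hc]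
          exact hj.2)
    refine ⟨_, fun i => ?_, hfr⟩
    by_cases hi : i = v
    · subst hi
      simpa using ha
    · rw [Function.update_of_ne hi]
      obtain ⟨i, rfl⟩ := hinv i hi
      rw [hc]
      exact hc'L i

end Colouring

theorem SimpleGraph.Noncrossing.isChordedCycle_map {n : ℕ} {H : SimpleGraph (Fin n)}
    (hH : H.Noncrossing) (hn : 3 ≤ n) (hconn : ∀ w, (H.induce {u | u ≠ w}).Connected) :
    (H.map Fin.valEmbedding).IsChordedCycle n := by
  refine SimpleGraph.isChordedCycle_of_separation hn ?_ ?_ ?_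
  · rintro _ _ ⟨-, i, j, -, rfl, rfl⟩
    exact i.2
  · rintro _ _ _ _ hab hbc hcd ⟨-, a, c, hac, rfl, rfl⟩ ⟨-, b, d, hbd, rfl, rfl⟩
    exact hH a b c d hab hbc hcd hac hbd
  · intro w A u v hw hu hv huA hvA huw hvw
    obtain ⟨x, hx, y, hy, hyw, hxy⟩ := (hconn ⟨w, hw⟩).exists_adj_of_mem_of_notMem
      (A := {z : Fin n | (z : ℕ) ∈ A}) (u := ⟨u, hu⟩) (v := ⟨v, hv⟩) huA hvA
      (by simpa using huw) (by simpa using hvw)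
    exact ⟨x, hx, y, hy, fun e => hyw (Fin.ext e),
      fun e => hxy.ne (Fin.ext e), x, y, hxy, rfl, rfl⟩

/-- For any `k ≥ 1` and 2-connected outerplanar graph `G` with `Δ(G) ≥ 7`,
`ch_k(G) ≤ ⌊(Δ(G) - 2)/k⌋ + 3`. Here 2-connected means: at least three vertices, and the
graph stays connected after deleting any single vertex. -/
theorem frugal_outerplanar_two_connected (k : ℕ) (hk : 1 ≤ k) {V : Type*} [Fintype V]
    (G : SimpleGraph V) [DecidableRel G.Adj] (hG : G.IsOuterplanar)
    (hcard : 3 ≤ Fintype.card V)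
    (h2conn : ∀ v : V, (G.induce {u : V | u ≠ v}).Connected)
    (hΔ : 7 ≤ G.maxDegree) :
    G.frugalChoiceNumber k ≤ (G.maxDegree - 2) / k + 3 := by
  obtain ⟨e, he⟩ := hG.exists_noncrossing_s14
  have hconn : ∀ w, ((G.comap e).induce {u | u ≠ w}).Connected := by
    intro w
    let f : (G.comap e).induce {u | u ≠ w} ≃g G.induce {u : V | u ≠ e w} :=
      { toEquiv := e.subtypeEquiv fun a => by simp
        map_rel_iff' := by simp }
    exact f.connected_iff.2 (h2conn (e w))
  have hcyc := he.isChordedCycle_map hcard hconn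
  have hadj : ∀ i j, ((G.comap e).map Fin.valEmbedding).Adj (e.symm i : ℕ) (e.symm j : ℕ) ↔
      G.Adj i j := by
    intro i j
    rw [← Fin.valEmbedding_apply, SimpleGraph.map_adj_apply]
    simp
  have hdeg : ∀ i, (((G.comap e).map Fin.valEmbedding).nbrs (Fintype.card V) i).card ≤
      G.maxDegree := by
    intro i
    by_cases hi : i < Fintype.card V
    · refine le_trans ?_ (G.degree_le_maxDegree (e ⟨i, hi⟩))
      rw [← SimpleGraph.card_neighborFinset_eq_degree]
      refine (Finset.card_le_card (t := (G.neighborFinset (e ⟨i, hi⟩)).image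
        fun u => (e.symm u : ℕ)) fun j hj => ?_).trans Finset.card_image_le
      rw [hcyc.mem_nbrs] at hj
      have hjn := hcyc.lt_of_adj hj.symm
      refine Finset.mem_image.2 ⟨e ⟨j, hjn⟩, ?_, by simp⟩
      rw [SimpleGraph.mem_neighborFinset, ← hadj]
      simpa using hj
    · rw [Finset.card_eq_zero.2]
      · exact Nat.zero_le _
      · exact Finset.eq_empty_of_forall_notMem fun j hj =>
          hi (hcyc.lt_of_adj (hcyc.mem_nbrs.1 hj))
  refine Nat.sInf_le fun L hL => ?_
  obtain ⟨c, hcL, hc, hfr⟩ := hcyc.exists_isFrugalBelow hk hΔ hcard hdeg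
    (fun i => if hi : i < Fintype.card V then L (e ⟨i, hi⟩) else L (e ⟨0, by omega⟩))
    (fun i => by split_ifs <;> rw [hL])
  refine ⟨fun u => c (e.symm u), fun u => ?_, fun u v huv => hc _ _ ((hadj u v).2 huv), ?_⟩
  · simpa using hcL (e.symm u)
  · intro v a
    refine le_trans ?_ (hfr (e.symm v) a)
    rw [← Set.ncard_coe_finset]
    refine Set.ncard_le_ncard_of_injOn (fun u => (e.symm u : ℕ)) ?_ ?_ (Finset.finite_toSet _)
    · rintro u ⟨hu, hua⟩
      exact Finset.mem_coe.2 (Finset.mem_filter.2 ⟨hcyc.mem_nbrs.2 ((hadj v u).2 hu), hua⟩)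
    · intro u _ w _ huw
      exact e.symm.injective (Fin.ext huw)
end
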